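/- arXiv:1208.0509 — 2 statements merged into one kernel-verified Lean document; each statement's English description precedes it below -/
import Mathlib

section
/- Let d ≥ 1, let r ≥ 2 be a prime, and let N = (d+1)(r−1). Let f : Δ_N → ℝ^d be a continuous map on the standard N-simplex, whose N+1 vertices are colored with d+2 colors so that the color classes satisfy |C_0| = |C_1| = … = |C_d| = r−1 and |C_{d+1}| = 1. Then the simplex Δ_N has r pairwise disjoint rainbow faces F_1, F_2, …, F_r whose images under f have a non-empty intersection: ⋂_{i=1}^r f(F_i) ≠ ∅. -/
open scoped Classical

/-- The face of the standard `N`-simplex (in `Fin (N+1) → ℝ`) spanned by the set `F`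
of its vertices. -/
def simplexFace (N : ℕ) (F : Finset (Fin (N + 1))) : Set (Fin (N + 1) → ℝ) :=
  {x | x ∈ stdSimplex ℝ (Fin (N + 1)) ∧ ∀ i ∉ F, x i = 0}

namespace CTv

section ExtGen
variable {R M M' : Type*} [CommRing R] [AddCommGroup M] [Module R M] [AddCommGroup M'] [Module R M']

/-- contraction by a functional on the exterior algebra -/
noncomputable def con (φ : Module.Dual R M) : ExteriorAlgebra R M →ₗ[R] ExteriorAlgebra R M :=
  CliffordAlgebra.contractLeft (Q := (0 : QuadraticForm R M)) φ

/-- grading involution -/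
noncomputable def inv : ExteriorAlgebra R M →ₐ[R] ExteriorAlgebra R M :=
  CliffordAlgebra.involute (Q := (0 : QuadraticForm R M))

theorem inv_ι (v : M) : inv (ExteriorAlgebra.ι R v) = - ExteriorAlgebra.ι R v :=
  CliffordAlgebra.involute_ι (Q := (0 : QuadraticForm R M)) v

theorem con_ι_mul (φ : Module.Dual R M) (v : M) (x : ExteriorAlgebra R M) :
    con φ (ExteriorAlgebra.ι R v * x) = φ v • x - ExteriorAlgebra.ι R v * con φ x :=
  CliffordAlgebra.contractLeft_ι_mul (Q := (0 : QuadraticForm R M)) φ v x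

theorem con_one (φ : Module.Dual R M) : con φ (1 : ExteriorAlgebra R M) = 0 :=
  CliffordAlgebra.contractLeft_one (Q := (0 : QuadraticForm R M)) (d := φ)

theorem con_algebraMap (φ : Module.Dual R M) (c : R) :
    con φ (algebraMap R (ExteriorAlgebra R M) c) = 0 :=
  CliffordAlgebra.contractLeft_algebraMap (Q := (0 : QuadraticForm R M)) (d := φ) c

theorem con_con (φ : Module.Dual R M) (x : ExteriorAlgebra R M) : con φ (con φ x) = 0 :=
  CliffordAlgebra.contractLeft_contractLeft (Q := (0 : QuadraticForm R M)) (d := φ) x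

theorem con_comm (φ ψ : Module.Dual R M) (x : ExteriorAlgebra R M) :
    con φ (con ψ x) = - con ψ (con φ x) :=
  CliffordAlgebra.contractLeft_comm (Q := (0 : QuadraticForm R M)) (d := φ) (d' := ψ) x

theorem ext_left_induction {P : ExteriorAlgebra R M → Prop}
    (h0 : ∀ c : R, P (algebraMap R (ExteriorAlgebra R M) c)) (hadd : ∀ x y, P x → P y → P (x + y))
    (hmul : ∀ x v, P x → P (ExteriorAlgebra.ι R v * x)) (x) : P x :=
  CliffordAlgebra.left_induction (0 : QuadraticForm R M) h0 hadd hmul x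

theorem inv_con (φ : Module.Dual R M) (x : ExteriorAlgebra R M) :
    inv (con φ x) = - con φ (inv x) := by
  induction x using ext_left_induction with
  | h0 c => simp [con_algebraMap]
  | hadd x y hx hy => rw [map_add, map_add, hx, hy, map_add, map_add]; abel
  | hmul x v hx =>
    rw [con_ι_mul, map_sub, map_smul, map_mul, hx, map_mul, inv_ι, neg_mul, neg_mul, map_neg, con_ι_mul]
    simp only [neg_mul, mul_neg]
    abel

theorem con_mul (φ : Module.Dual R M) (x y : ExteriorAlgebra R M) :
    con φ (x * y) = con φ x * y + inv x * con φ y := by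
  induction x using ext_left_induction with
  | h0 c =>
    rw [con_algebraMap, zero_mul, zero_add, ← Algebra.smul_def, map_smul, AlgHom.commutes,
      ← Algebra.smul_def]
  | hadd x x' hx hy => rw [add_mul, map_add, hx, hy, map_add, map_add, add_mul, add_mul]; abel
  | hmul x v hx =>
    rw [mul_assoc, con_ι_mul, hx, con_ι_mul, map_mul, inv_ι, sub_mul, mul_add, smul_mul_assoc]
    simp only [neg_mul, mul_assoc]
    abel

theorem con_map (φ : Module.Dual R M') (T : M →ₗ[R] M') (x : ExteriorAlgebra R M) :
    con φ (ExteriorAlgebra.map T x) = ExteriorAlgebra.map T (con (φ ∘ₗ T) x) := by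
  induction x using ext_left_induction with
  | h0 c => simp [con_algebraMap]
  | hadd x y hx hy => simp only [map_add, hx, hy]
  | hmul x v hx =>
    rw [map_mul, ExteriorAlgebra.map_apply_ι, con_ι_mul, con_ι_mul, hx, map_sub, map_smul, map_mul,
      ExteriorAlgebra.map_apply_ι]
    rfl

/-- iterated contraction; the head is applied first -/
noncomputable def conL : List (Module.Dual R M) → ExteriorAlgebra R M →ₗ[R] ExteriorAlgebra R M
  | [] => LinearMap.id
  | φ :: l => conL l ∘ₗ con φ

theorem conL_nil (x : ExteriorAlgebra R M) : conL [] x = x := rfl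
theorem conL_cons (φ : Module.Dual R M) (l) (x : ExteriorAlgebra R M) :
    conL (φ :: l) x = conL l (con φ x) := rfl

theorem con_conL (ψ : Module.Dual R M) (l : List (Module.Dual R M)) (x : ExteriorAlgebra R M) :
    con ψ (conL l x) = (-1 : R) ^ l.length • conL l (con ψ x) := by
  induction l generalizing x with
  | nil => simp [conL_nil]
  | cons φ l ih =>
    rw [conL_cons, ih, conL_cons, con_comm ψ φ, map_neg, List.length_cons, pow_succ]
    simp

theorem conL_kill (φ : Module.Dual R M) (l : List (Module.Dual R M)) (hφ : φ ∈ l)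
    (x : ExteriorAlgebra R M) (hx : con φ x = 0) : conL l x = 0 := by
  induction l generalizing x with
  | nil => simp at hφ
  | cons ψ l ih =>
    rw [conL_cons]
    rcases List.mem_cons.1 hφ with rfl | h
    · rw [hx, map_zero]
    · exact ih h _ (by rw [con_comm, hx, map_zero, neg_zero])

theorem con_conL_mem (φ : Module.Dual R M) (l : List (Module.Dual R M)) (hφ : φ ∈ l)
    (x : ExteriorAlgebra R M) : con φ (conL l x) = 0 := by
  rw [con_conL, conL_kill φ l hφ _ (con_con φ x), smul_zero]

/-- product of a list of vectors -/
noncomputable def pr (l : List M) : ExteriorAlgebra R M := (l.map (ExteriorAlgebra.ι R)).prod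

theorem pr_nil : pr (R := R) ([] : List M) = 1 := rfl
theorem pr_cons (v : M) (l : List M) : pr (v :: l) = ExteriorAlgebra.ι R v * pr l := by
  simp [pr]

theorem con_pr_mul (φ : Module.Dual R M) (l : List M) (hl : ∀ v ∈ l, φ v = 0)
    (y : ExteriorAlgebra R M) (hy : con φ y = 0) : con φ (pr l * y) = 0 := by
  induction l with
  | nil => simpa [pr_nil] using hy
  | cons v l ih =>
    rw [pr_cons, mul_assoc, con_ι_mul, hl v (by simp), ih (fun w hw => hl w (by simp [hw]))]
    simp

theorem con_pr (φ : Module.Dual R M) (l : List M) (hl : ∀ v ∈ l, φ v = 0) :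
    con φ (pr (R := R) l) = 0 := by
  simpa using con_pr_mul φ l hl 1 (con_one φ)

theorem inv_pr (l : List M) : inv (pr (R := R) l) = (-1 : R) ^ l.length • pr l := by
  induction l with
  | nil => simp [pr_nil]
  | cons v l ih =>
    rw [pr_cons, map_mul, inv_ι, ih, List.length_cons, pow_succ]
    simp

theorem map_pr (T : M →ₗ[R] M') (l : List M) :
    ExteriorAlgebra.map T (pr (R := R) l) = pr (l.map T) := by
  induction l with
  | nil => simp [pr_nil]
  | cons v l ih => rw [pr_cons, map_mul, ih, List.map_cons, pr_cons, ExteriorAlgebra.map_apply_ι]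

/-- integer grading -/
noncomputable def Gr (R M : Type*) [CommRing R] [AddCommGroup M] [Module R M] (n : ℤ) :
    Submodule R (ExteriorAlgebra R M) :=
  Submodule.span R {x | ∃ l : List M, (l.length : ℤ) = n ∧ x = pr l}

theorem pr_mem_Gr (l : List M) (n : ℤ) (h : (l.length : ℤ) = n) : pr l ∈ Gr R M n :=
  Submodule.subset_span ⟨l, h, rfl⟩

theorem Gr_le {n : ℤ} {M₂ : Type*} [AddCommGroup M₂] [Module R M₂]
    (T : ExteriorAlgebra R M →ₗ[R] M₂) (S : Submodule R M₂)
    (h : ∀ l : List M, (l.length : ℤ) = n → T (pr l) ∈ S) (x) (hx : x ∈ Gr R M n) : T x ∈ S := by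
  have : Gr R M n ≤ S.comap T := by
    refine Submodule.span_le.2 ?_
    rintro _ ⟨l, hl, rfl⟩
    exact h l hl
  exact this hx

theorem Gr_neg {n : ℤ} (hn : n < 0) (x) (hx : x ∈ Gr R M n) : x = 0 := by
  have := Gr_le (LinearMap.id) (⊥ : Submodule R (ExteriorAlgebra R M)) (fun l hl => by omega) x hx
  simpa using this

theorem Gr_zero (x) (hx : x ∈ Gr R M 0) : ∃ c : R, x = c • 1 := by
  have := Gr_le (LinearMap.id) (Submodule.span R {(1 : ExteriorAlgebra R M)}) (fun l hl => by
    have : l = [] := by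
      apply List.eq_nil_of_length_eq_zero; omega
    subst this
    exact Submodule.mem_span_singleton_self _) x hx
  obtain ⟨c, hc⟩ := Submodule.mem_span_singleton.1 this
  exact ⟨c, hc.symm⟩

theorem ι_mul_mem_Gr {n : ℤ} (v : M) (x) (hx : x ∈ Gr R M n) :
    ExteriorAlgebra.ι R v * x ∈ Gr R M (n + 1) := by
  refine Gr_le (LinearMap.mulLeft R (ExteriorAlgebra.ι R v)) _ (fun l hl => ?_) x hx
  rw [LinearMap.mulLeft_apply, ← pr_cons]
  exact pr_mem_Gr _ _ (by push_cast [List.length_cons]; omega)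

theorem pr_mul_mem_Gr {n : ℤ} (l : List M) (x) (hx : x ∈ Gr R M n) :
    pr l * x ∈ Gr R M (n + l.length) := by
  induction l with
  | nil => simpa [pr_nil] using hx
  | cons v l ih =>
    rw [pr_cons, mul_assoc]
    have := ι_mul_mem_Gr v _ ih
    push_cast [List.length_cons]
    rwa [← add_assoc]

theorem con_mem_Gr {n : ℤ} (φ : Module.Dual R M) (x) (hx : x ∈ Gr R M n) :
    con φ x ∈ Gr R M (n - 1) := by
  refine Gr_le (con φ) _ (fun l hl => ?_) x hx
  induction l generalizing n x with
  | nil => rw [pr_nil, con_one]; exact zero_mem _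
  | cons v l ih =>
    rw [pr_cons, con_ι_mul]
    push_cast [List.length_cons] at hl
    refine sub_mem (Submodule.smul_mem _ _ (pr_mem_Gr _ _ (by omega))) ?_
    have := ι_mul_mem_Gr v _ (ih (n := n - 1) (pr l) (pr_mem_Gr _ _ (by omega)) (by omega))
    simpa using this

theorem conL_mem_Gr {n : ℤ} (l : List (Module.Dual R M)) (x) (hx : x ∈ Gr R M n) :
    conL l x ∈ Gr R M (n - l.length) := by
  induction l generalizing n x with
  | nil => simpa [conL_nil] using hx
  | cons φ l ih =>
    rw [conL_cons]
    have := ih _ (con_mem_Gr φ x hx)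
    push_cast [List.length_cons]
    convert this using 1
    ring_nf

theorem map_mem_Gr {n : ℤ} (T : M →ₗ[R] M') (x) (hx : x ∈ Gr R M n) :
    ExteriorAlgebra.map T x ∈ Gr R M' n := by
  refine Gr_le (ExteriorAlgebra.map T).toLinearMap _ (fun l hl => ?_) x hx
  rw [AlgHom.toLinearMap_apply, map_pr]
  exact pr_mem_Gr _ _ (by simpa using hl)

end ExtGen
end CTv

namespace CTv

section ExtGen2
variable {R M : Type*} [CommRing R] [AddCommGroup M] [Module R M]

theorem conL_perm {l l' : List (Module.Dual R M)} (h : l.Perm l') :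
    ∀ x : ExteriorAlgebra R M, conL l x = 0 ↔ conL l' x = 0 := by
  induction h with
  | nil => intro x; rfl
  | cons a _ ih => intro x; exact ih (con a x)
  | swap a b l =>
    intro x
    rw [conL_cons, conL_cons, conL_cons, conL_cons, con_comm a b, map_neg, neg_eq_zero]
  | trans _ _ h1 h2 => intro x; exact (h1 x).trans (h2 x)

end ExtGen2

section Cols
variable (D r : ℕ)

/-- label vector space -/
abbrev LV := (Fin D × ZMod r) → ZMod r
/-- target algebra -/
abbrev LA := ExteriorAlgebra (ZMod r) (LV D r)

variable {D r}

/-- coordinate functional -/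
def co (u : Fin D × ZMod r) : Module.Dual (ZMod r) (LV D r) := LinearMap.proj u

/-- basis vector -/
noncomputable def eb (u : Fin D × ZMod r) : LV D r := Pi.single u 1

theorem co_eb (u w : Fin D × ZMod r) : co u (eb w) = if u = w then 1 else 0 := by
  simp [co, eb, Pi.single_apply]

variable [Fact r.Prime]

/-- augmentation -/
noncomputable def aug : Module.Dual (ZMod r) (LV D r) := ∑ u, co u

theorem aug_apply (v : LV D r) : aug v = ∑ u, v u := by
  rw [aug, LinearMap.sum_apply]; rfl

theorem aug_eb (w : Fin D × ZMod r) : aug (eb w) = 1 := by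
  simp [aug, LinearMap.sum_apply, co_eb]

/-- boundary -/
noncomputable def bdA : LA D r →ₗ[ZMod r] LA D r := con aug

noncomputable def ks (r : ℕ) [Fact r.Prime] : List (ZMod r) := (Finset.univ.erase (0 : ZMod r)).toList

theorem mem_ks (k : ZMod r) : k ∈ ks r ↔ k ≠ 0 := by simp [ks]
theorem nodup_ks : (ks r).Nodup := Finset.nodup_toList _
theorem length_ks : (ks r).length = r - 1 := by
  simp [ks, ZMod.card]
theorem ks_perm : ((0 : ZMod r) :: ks r).Perm (Finset.univ : Finset (ZMod r)).toList := by
  refine (List.perm_ext_iff_of_nodup ?_ (Finset.nodup_toList _)).2 ?_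
  · rw [List.nodup_cons]; exact ⟨by simp [mem_ks], nodup_ks⟩
  · intro a; simp only [List.mem_cons, mem_ks, Finset.mem_toList, Finset.mem_univ, iff_true]
    exact em _

theorem neg_one_pow_r : (-1 : ZMod r) ^ (r - 1) = 1 :=
  ZMod.pow_card_sub_one_eq_one (neg_ne_zero.2 one_ne_zero)

/-- contraction along the nonzero part of column `j` -/
noncomputable def KK (j : Fin D) : LA D r →ₗ[ZMod r] LA D r :=
  conL ((ks r).map fun k => co (j, k))

theorem con_KK (ψ : Module.Dual (ZMod r) (LV D r)) (j : Fin D) (x : LA D r) :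
    con ψ (KK j x) = KK j (con ψ x) := by
  rw [KK, con_conL, List.length_map, length_ks, neg_one_pow_r, one_smul]

theorem con_KK_mem (j : Fin D) (k : ZMod r) (hk : k ≠ 0) (x : LA D r) :
    con (co (j, k)) (KK j x) = 0 := by
  rw [KK]
  refine con_conL_mem _ _ ?_ x
  rw [List.mem_map]
  exact ⟨k, (mem_ks k).2 hk, rfl⟩

/-- chains without full column -/
noncomputable def CL (D r : ℕ) [Fact r.Prime] : Submodule (ZMod r) (LA D r) :=
  ⨅ j : Fin D, LinearMap.ker (conL ((Finset.univ : Finset (ZMod r)).toList.map fun k => co (j, k)))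

theorem mem_CL' (x : LA D r) : x ∈ CL D r ↔
    ∀ j : Fin D, conL ((Finset.univ : Finset (ZMod r)).toList.map fun k => co (j, k)) x = 0 := by
  simp [CL]

theorem mem_CL (x : LA D r) : x ∈ CL D r ↔ ∀ j : Fin D, KK j (con (co (j, 0)) x) = 0 := by
  rw [mem_CL']
  refine forall_congr' fun j => ?_
  rw [← conL_perm (ks_perm.map fun k => co (j, k))]
  rfl

/-- full column product -/
noncomputable def om (j : Fin D) : LA D r := pr (((0 : ZMod r) :: ks r).map fun k => eb (j, k))
noncomputable def zz (j : Fin D) : LA D r := bdA (om j)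

theorem inv_om (j : Fin D) : inv (om (r := r) j) = - om j := by
  rw [om, inv_pr, List.length_map, List.length_cons, length_ks, pow_succ, neg_one_pow_r]
  simp

theorem inv_zz (j : Fin D) : inv (zz (r := r) j) = zz j := by
  rw [zz, bdA, inv_con, inv_om, map_neg, neg_neg]

theorem bd_om_mul (j : Fin D) (y : LA D r) : bdA (om j * y) = zz j * y - om j * bdA y := by
  rw [bdA, con_mul, inv_om, zz, bdA, neg_mul, sub_eq_add_neg]

theorem con_om (j j' : Fin D) (h : j' ≠ j) (k : ZMod r) : con (co (j', k)) (om (r := r) j) = 0 := by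
  refine con_pr _ _ ?_
  intro v hv
  obtain ⟨k', -, rfl⟩ := List.mem_map.1 hv
  rw [co_eb, if_neg]
  intro h'
  exact h (Prod.ext_iff.1 h').1

theorem con_zz (j j' : Fin D) (h : j' ≠ j) (k : ZMod r) : con (co (j', k)) (zz (r := r) j) = 0 := by
  rw [zz, bdA, con_comm, con_om j j' h, map_zero, neg_zero]

theorem con_zz_mul (j j' : Fin D) (h : j' ≠ j) (k : ZMod r) (y : LA D r) :
    con (co (j', k)) (zz j * y) = zz j * con (co (j', k)) y := by
  rw [con_mul, con_zz j j' h, inv_zz, zero_mul, zero_add]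

theorem conL_zz_mul (j j' : Fin D) (h : j' ≠ j) (l : List (ZMod r)) (y : LA D r) :
    conL (l.map fun k => co (j', k)) (zz j * y) = zz j * conL (l.map fun k => co (j', k)) y := by
  induction l generalizing y with
  | nil => rfl
  | cons k l ih => rw [List.map_cons, conL_cons, con_zz_mul j j' h, ih, conL_cons]

theorem KK_zz_mul (j j' : Fin D) (h : j' ≠ j) (y : LA D r) :
    KK j' (zz j * y) = zz j * KK j' y := conL_zz_mul j j' h _ y

theorem conL_pr_mul (j : Fin D) (l : List (ZMod r)) (hl : l.Nodup) (y : LA D r)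
    (hy : ∀ k ∈ l, con (co (j, k)) y = 0) :
    conL (l.map fun k => co (j, k)) (pr (l.map fun k => eb (j, k)) * y) = y := by
  induction l with
  | nil => simp [conL_nil, pr_nil]
  | cons k l ih =>
    rw [List.nodup_cons] at hl
    rw [List.map_cons, conL_cons, List.map_cons, pr_cons, mul_assoc, con_ι_mul, co_eb, if_pos rfl,
      con_pr_mul, mul_zero, sub_zero, one_smul]
    · exact ih hl.2 fun k' hk' => hy k' (by simp [hk'])
    · intro v hv
      obtain ⟨k', hk', rfl⟩ := List.mem_map.1 hv
      rw [co_eb, if_neg]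
      rintro h'
      have : k = k' := (Prod.ext_iff.1 h').2
      subst this
      exact hl.1 hk'
    · exact hy k (by simp)

/-- the contracting homotopy of a column -/
noncomputable def hh (j : Fin D) (x : LA D r) : LA D r :=
  ExteriorAlgebra.ι _ (eb (j, 0)) * x - om j * KK j x

theorem hh_homotopy (j : Fin D) (x : LA D r) : bdA (hh j x) = x - hh j (bdA x) - zz j * KK j x := by
  have h1 : bdA (KK j x) = KK j (bdA x) := con_KK _ _ _
  have h2 : bdA (ExteriorAlgebra.ι _ (eb (j, 0)) * x) = x - ExteriorAlgebra.ι _ (eb (j, 0)) * bdA x := by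
    rw [bdA, con_ι_mul, aug_eb, one_smul]
  rw [hh, map_sub, h2, bd_om_mul, h1, hh]
  abel

theorem con_om_mul (j j' : Fin D) (h : j' ≠ j) (k : ZMod r) (y : LA D r) :
    con (co (j', k)) (om j * y) = - (om j * con (co (j', k)) y) := by
  rw [con_mul, con_om j j' h, inv_om, zero_mul, zero_add, neg_mul]

theorem conL_om_mul_zero (j j' : Fin D) (h : j' ≠ j) (l : List (ZMod r)) (y : LA D r)
    (hy : conL (l.map fun k => co (j', k)) y = 0) :
    conL (l.map fun k => co (j', k)) (om j * y) = 0 := by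
  have : conL (l.map fun k => co (j', k)) (om j * y) =
      (-1 : ZMod r) ^ l.length • (om j * conL (l.map fun k => co (j', k)) y) := by
    clear hy
    induction l generalizing y with
    | nil => simp [conL_nil]
    | cons k l ih =>
      rw [List.map_cons, conL_cons, con_om_mul j j' h, map_neg, ih, conL_cons, List.length_cons,
        pow_succ]
      simp
  rw [this, hy, mul_zero, smul_zero]

theorem conL_ι_mul (v : LV D r) (l : List (Module.Dual (ZMod r) (LV D r))) (hl : ∀ φ ∈ l, φ v = 0)
    (y : LA D r) : conL l (ExteriorAlgebra.ι _ v * y) =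
      (-1 : ZMod r) ^ l.length • (ExteriorAlgebra.ι _ v * conL l y) := by
  induction l generalizing y with
  | nil => simp [conL_nil]
  | cons φ l ih =>
    rw [conL_cons, con_ι_mul, hl φ (by simp), zero_smul, zero_sub, map_neg,
      ih (fun ψ hψ => hl ψ (by simp [hψ])), conL_cons, List.length_cons, pow_succ]
    simp

theorem hh_mem_CL (j : Fin D) (x : LA D r) (hx : x ∈ CL D r) : hh j x ∈ CL D r := by
  rw [mem_CL]
  intro j'
  by_cases h : j' = j
  · subst h
    have hx' := (mem_CL x).1 hx j'
    have hK : con (co (j', (0 : ZMod r))) (KK j' x) = 0 := by rw [con_KK, hx']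
    have e1 : KK j' (con (co (j', 0)) (ExteriorAlgebra.ι _ (eb (j', 0)) * x)) = KK j' x := by
      rw [con_ι_mul, co_eb, if_pos rfl, one_smul, map_sub]
      have : KK j' (ExteriorAlgebra.ι _ (eb (j', (0 : ZMod r))) * con (co (j', 0)) x) = 0 := by
        rw [KK, conL_ι_mul]
        · rw [← KK, hx', mul_zero, smul_zero]
        · intro φ hφ
          obtain ⟨k, hk, rfl⟩ := List.mem_map.1 hφ
          rw [co_eb, if_neg]
          intro h'
          exact (mem_ks k).1 hk (Prod.ext_iff.1 h').2
      rw [this, sub_zero]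
    have e2 : KK j' (con (co (j', 0)) (om j' * KK j' x)) = KK j' x := by
      have := conL_pr_mul j' ((0 : ZMod r) :: ks r)
        (by rw [List.nodup_cons]; exact ⟨by simp [mem_ks], nodup_ks⟩) (KK j' x) (by
          intro k hk
          by_cases h0 : k = 0
          · rw [h0, hK]
          · exact con_KK_mem j' k h0 x)
      exact this
    rw [hh, map_sub, map_sub, e1, e2, sub_self]
  · have hx' := (mem_CL x).1 hx j'
    have hne : ∀ k : ZMod r, co (j', k) (eb (j, (0 : ZMod r))) = 0 := by
      intro k
      rw [co_eb, if_neg]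
      intro h'
      exact h (Prod.ext_iff.1 h').1
    rw [hh, map_sub, map_sub]
    have e1 : KK j' (con (co (j', 0)) (ExteriorAlgebra.ι _ (eb (j, 0)) * x)) = 0 := by
      rw [con_ι_mul, hne, zero_smul, zero_sub, map_neg, KK, conL_ι_mul]
      · rw [← KK, hx', mul_zero, smul_zero, neg_zero]
      · intro φ hφ
        obtain ⟨k, hk, rfl⟩ := List.mem_map.1 hφ
        exact hne k
    have e2 : KK j' (con (co (j', 0)) (om j * KK j x)) = 0 := by
      rw [con_om_mul j j' h, map_neg, KK, conL_om_mul_zero j j' h, neg_zero]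
      rw [← KK, con_KK]
      have : ∀ (l : List (ZMod r)) (y : LA D r), conL (l.map fun k => co (j', k)) (KK j y) =
          KK j (conL (l.map fun k => co (j', k)) y) := by
        intro l
        induction l with
        | nil => intro y; rfl
        | cons k l ih => intro y; rw [List.map_cons, conL_cons, con_KK, ih, conL_cons]
      rw [KK, this, ← KK, hx', map_zero]
    rw [e1, e2, sub_zero]

theorem bdA_mem_CL (x : LA D r) (hx : x ∈ CL D r) : bdA x ∈ CL D r := by
  rw [mem_CL] at *
  intro j
  have := hx j
  rw [bdA, con_comm, map_neg, ← con_KK, this, map_zero, neg_zero]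

theorem bdA_mem_Gr {n : ℤ} (x : LA D r) (hx : x ∈ Gr _ _ n) : bdA x ∈ Gr (ZMod r) (LV D r) (n - 1) :=
  con_mem_Gr _ x hx

theorem bdA_bdA (x : LA D r) : bdA (bdA x) = 0 := con_con _ x

theorem KK_mem_Gr {n : ℤ} (j : Fin D) (x : LA D r) (hx : x ∈ Gr _ _ n) :
    KK j x ∈ Gr (ZMod r) (LV D r) (n - (r - 1 : ℕ)) := by
  have := conL_mem_Gr ((ks r).map fun k => co (j, k)) x hx
  rwa [List.length_map, length_ks] at this

theorem hh_mem_Gr {n : ℤ} (j : Fin D) (x : LA D r) (hx : x ∈ Gr _ _ n) :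
    hh j x ∈ Gr (ZMod r) (LV D r) (n + 1) := by
  refine sub_mem (ι_mul_mem_Gr _ _ hx) ?_
  have := pr_mul_mem_Gr (((0 : ZMod r) :: ks r).map fun k => eb (j, k)) _ (KK_mem_Gr j x hx)
  rw [List.length_map, List.length_cons, length_ks] at this
  rw [om]
  convert this using 2
  push_cast
  ring

/-- product of the column spheres -/
noncomputable def ZL (js : List (Fin D)) : LA D r := (js.map zz).prod

noncomputable def KL : List (Fin D) → LA D r →ₗ[ZMod r] LA D r
  | [] => LinearMap.id
  | j :: js => KK j ∘ₗ KL js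

theorem KL_mem_Gr {n : ℤ} (js : List (Fin D)) (x : LA D r) (hx : x ∈ Gr _ _ n) :
    KL js x ∈ Gr (ZMod r) (LV D r) (n - (js.length * (r - 1) : ℕ)) := by
  induction js with
  | nil => simpa [KL] using hx
  | cons j js ih =>
    have := KK_mem_Gr j _ ih
    have e : n - (((j :: js).length * (r - 1) : ℕ) : ℤ) =
        n - (js.length * (r - 1) : ℕ) - (r - 1 : ℕ) := by
      rw [List.length_cons, Nat.add_mul]
      push_cast
      ring
    rw [e]
    exact this

theorem KK_ZL (j : Fin D) (js : List (Fin D)) (h : j ∉ js) (y : LA D r) :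
    KK j (ZL js * y) = ZL js * KK j y := by
  induction js with
  | nil => simp [ZL]
  | cons i js ih =>
    rw [List.mem_cons, not_or] at h
    have : (ZL (i :: js) : LA D r) = zz i * ZL js := by simp [ZL]
    rw [this, mul_assoc, KK_zz_mul i j h.1, ih h.2, mul_assoc]

theorem fill_aux (js : List (Fin D)) (hjs : js.Nodup) (n : ℤ) (x : LA D r) (hx : x ∈ CL D r)
    (hn : x ∈ Gr (ZMod r) (LV D r) n) (hb : bdA x = 0) :
    ∃ y ∈ CL D r, y ∈ Gr (ZMod r) (LV D r) (n + 1) ∧ bdA y = x - ZL js * KL js x := by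
  induction js with
  | nil => exact ⟨0, zero_mem _, zero_mem _, by simp [ZL, KL]⟩
  | cons j js ih =>
    rw [List.nodup_cons] at hjs
    obtain ⟨y, hy1, hy2, hy3⟩ := ih hjs.2
    set x' := ZL js * KL js x with hx'
    have e : x' = x - bdA y := by rw [hy3]; abel
    have c1 : x' ∈ CL D r := by rw [e]; exact sub_mem hx (bdA_mem_CL _ hy1)
    have c2 : x' ∈ Gr (ZMod r) (LV D r) n := by
      rw [e]; refine sub_mem hn ?_
      have := bdA_mem_Gr y hy2
      simpa using this
    have c3 : bdA x' = 0 := by rw [e, map_sub, hb, bdA_bdA, sub_zero]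
    refine ⟨y + hh j x', add_mem hy1 (hh_mem_CL _ _ c1), add_mem hy2 (hh_mem_Gr _ _ c2), ?_⟩
    have h0 : hh j (0 : LA D r) = 0 := by simp [hh]
    have : (ZL (j :: js) : LA D r) = zz j * ZL js := by simp [ZL]
    rw [map_add, hy3, hh_homotopy, c3, h0, this, hx', KK_ZL j js hjs.1, mul_assoc]
    simp [KL]

theorem fill_exists (n : ℤ) (hlt : n < (D * (r - 1) : ℕ)) (x : LA D r) (hx : x ∈ CL D r)
    (hn : x ∈ Gr (ZMod r) (LV D r) n) (hb : bdA x = 0) :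
    ∃ y ∈ CL D r, y ∈ Gr (ZMod r) (LV D r) (n + 1) ∧ bdA y = x := by
  obtain ⟨y, h1, h2, h3⟩ := fill_aux (List.finRange D) (List.nodup_finRange D) n x hx hn hb
  refine ⟨y, h1, h2, ?_⟩
  have := KL_mem_Gr (List.finRange D) x hn
  rw [List.length_finRange] at this
  rw [h3, Gr_neg (by omega) _ this, mul_zero, sub_zero]

theorem ι_mul_pr_mem (v : LV D r) (l : List (LV D r)) (h : v ∈ l) :
    ExteriorAlgebra.ι (ZMod r) v * pr l = 0 := by
  induction l with
  | nil => simp at h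
  | cons w l ih =>
    rw [pr_cons, ← mul_assoc]
    rcases List.mem_cons.1 h with rfl | h'
    · rw [ExteriorAlgebra.ι_sq_zero, zero_mul]
    · have := ExteriorAlgebra.ι_add_mul_swap (R := ZMod r) v w
      rw [eq_neg_of_add_eq_zero_left this, neg_mul, mul_assoc, ih h', mul_zero, neg_zero]

theorem pr_mul_ι (v : LV D r) (l : List (LV D r)) :
    pr l * ExteriorAlgebra.ι (ZMod r) v =
      (-1 : ZMod r) ^ l.length • (ExteriorAlgebra.ι (ZMod r) v * pr l) := by
  induction l with
  | nil => simp [pr_nil]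
  | cons w l ih =>
    have := ExteriorAlgebra.ι_add_mul_swap (R := ZMod r) w v
    rw [pr_cons, mul_assoc, ih, mul_smul_comm, ← mul_assoc, eq_neg_of_add_eq_zero_left this,
      List.length_cons, pow_succ]
    simp [mul_assoc]

theorem eq_zero_of_con (m : ℤ) (hm : 0 < m) (x : LA D r) (hx : x ∈ Gr (ZMod r) (LV D r) m)
    (h : ∀ u, con (co u) x = 0) : x = 0 := by
  have key : ∀ us : List (Fin D × ZMod r), us.Nodup →
      conL (us.map co) (pr (us.map eb) * x) = x := by
    intro us hus
    induction us with
    | nil => simp [conL_nil, pr_nil]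
    | cons u us ih =>
      rw [List.nodup_cons] at hus
      rw [List.map_cons, conL_cons, List.map_cons, pr_cons, mul_assoc, con_ι_mul, co_eb, if_pos rfl,
        con_pr_mul, mul_zero, sub_zero, one_smul]
      · exact ih hus.2
      · intro v hv
        obtain ⟨k', hk', rfl⟩ := List.mem_map.1 hv
        rw [co_eb, if_neg]
        rintro rfl
        exact hus.1 hk'
      · exact h u
  have e : ∀ v : LV D r, pr ((Finset.univ : Finset (Fin D × ZMod r)).toList.map eb) *
      ExteriorAlgebra.ι (ZMod r) v = 0 := by
    intro v
    have hv : v = ∑ u, v u • eb u := by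
      funext w
      simp [eb, Pi.single_apply]
    rw [hv, map_sum, Finset.mul_sum]
    refine Finset.sum_eq_zero fun u _ => ?_
    rw [map_smul, mul_smul_comm, pr_mul_ι, ι_mul_pr_mem, smul_zero, smul_zero]
    exact List.mem_map.2 ⟨u, by simp, rfl⟩
  have e2 : pr ((Finset.univ : Finset (Fin D × ZMod r)).toList.map eb) * x = 0 := by
    have := Gr_le (LinearMap.mulLeft (ZMod r)
      (pr ((Finset.univ : Finset (Fin D × ZMod r)).toList.map eb))) ⊥ (fun l hl => by
        cases l with
        | nil => simp at hl; omega
        | cons v l =>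
          rw [LinearMap.mulLeft_apply, pr_cons, ← mul_assoc, e, zero_mul]
          exact zero_mem _) x hx
    simpa using this
  rw [← key Finset.univ.toList (Finset.nodup_toList _), e2, map_zero]

theorem eq_zero_of_conL (m : ℕ) (x : LA D r) (hx : x ∈ Gr (ZMod r) (LV D r) m)
    (h : ∀ us : List (Fin D × ZMod r), us.length = m → conL (us.map co) x = 0) : x = 0 := by
  induction m generalizing x with
  | zero => simpa [conL_nil] using h [] rfl
  | succ m ih =>
    refine eq_zero_of_con _ (by positivity) x hx fun u => ?_
    refine ih _ (by simpa using con_mem_Gr (co u) x hx) fun us hus => ?_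
    have := h (u :: us) (by simp [hus])
    simpa [conL_cons] using this

theorem conL_append {R M : Type*} [CommRing R] [AddCommGroup M] [Module R M]
    (l l' : List (Module.Dual R M)) (x : ExteriorAlgebra R M) :
    conL (l ++ l') x = conL l' (conL l x) := by
  induction l generalizing x with
  | nil => rfl
  | cons φ l ih => rw [List.cons_append, conL_cons, ih, conL_cons]

theorem CL_top (m : ℕ) (hm : D * (r - 1) < m) (x : LA D r) (hx : x ∈ CL D r)
    (hg : x ∈ Gr (ZMod r) (LV D r) m) : x = 0 := by
  refine eq_zero_of_conL m x hg fun us hus => ?_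
  by_cases hn : us.Nodup
  · -- some column is full
    have : ∃ j : Fin D, ∀ k : ZMod r, (j, k) ∈ us := by
      by_contra hcon
      push Not at hcon
      choose i hi using hcon
      have hsub : us.toFinset ⊆ Finset.univ.filter fun u : Fin D × ZMod r => u.2 ≠ i u.1 := by
        intro u hu
        simp only [Finset.mem_filter, Finset.mem_univ, true_and]
        rintro h
        apply hi u.1
        rw [← h]
        simpa using hu
      have hc := Finset.card_le_card hsub
      rw [List.toFinset_card_of_nodup hn, hus] at hc
      have : (Finset.univ.filter fun u : Fin D × ZMod r => u.2 ≠ i u.1).card = D * (r - 1) := by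
        rw [Finset.card_filter, Fintype.sum_prod_type]
        have : ∀ j : Fin D, (∑ y : ZMod r, if y ≠ i j then 1 else 0) = r - 1 := by
          intro j
          rw [← Finset.card_filter, Finset.filter_ne', Finset.card_erase_of_mem (Finset.mem_univ _)]
          simp [ZMod.card]
        simp only [this]
        simp
      omega
    obtain ⟨j, hj⟩ := this
    have hx' := (mem_CL' x).1 hx j
    let cl : List (Fin D × ZMod r) := (Finset.univ : Finset (ZMod r)).toList.map fun k => (j, k)
    have hperm : us.Perm (cl ++ us.filter (fun u => u ∉ cl)) := by
      have hcl : cl.Nodup := (Finset.nodup_toList _).map (fun a b h => by simpa using h)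
      refine (List.perm_ext_iff_of_nodup hn ?_).2 ?_
      · refine List.Nodup.append hcl (hn.filter _) ?_
        intro u h1 h2
        simp at h2
        exact h2.2 h1
      · intro u
        simp only [List.mem_append, List.mem_filter, decide_eq_true_eq]
        constructor
        · intro h; by_cases h' : u ∈ cl <;> simp [h, h']
        · rintro (h | h)
          · obtain ⟨k, -, rfl⟩ := List.mem_map.1 h
            exact hj k
          · exact h.1
    rw [conL_perm (hperm.map co), List.map_append, conL_append]
    have : cl.map co = (Finset.univ : Finset (ZMod r)).toList.map fun k => co (j, k) := by
      simp [cl]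
    rw [this, hx', map_zero]
  · clear hus hm hx hg
    induction us generalizing x with
    | nil => simp at hn
    | cons u us ih =>
      rw [List.map_cons, conL_cons]
      by_cases hu : u ∈ us
      · exact conL_kill (co u) _ (List.mem_map.2 ⟨u, hu, rfl⟩) _ (con_con _ _)
      · refine ih _ ?_
        rw [List.nodup_cons] at hn
        tauto

theorem top_cycle (x : LA D r) (hx : x ∈ CL D r)
    (hn : x ∈ Gr (ZMod r) (LV D r) (D * (r - 1) : ℕ)) (hb : bdA x = 0) :
    ∃ c : ZMod r, x = c • ZL (List.finRange D) := by
  obtain ⟨y, h1, h2, h3⟩ := fill_aux (List.finRange D) (List.nodup_finRange D) _ x hx hn hb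
  have hy : y = 0 := CL_top (D * (r - 1) + 1) (by omega) y h1 (by exact_mod_cast h2)
  have := KL_mem_Gr (List.finRange D) x hn
  rw [List.length_finRange, sub_self] at this
  obtain ⟨c, hc⟩ := Gr_zero _ this
  refine ⟨c, ?_⟩
  rw [hy, map_zero, hc] at h3
  rw [← sub_eq_zero]
  simpa using h3.symm

/-- the cyclic shift on labels -/
def sh (a : ZMod r) : LV D r →ₗ[ZMod r] LV D r :=
  LinearMap.funLeft (ZMod r) (ZMod r) fun u => (u.1, u.2 - a)

theorem sh_apply (a : ZMod r) (v : LV D r) (u) : sh a v u = v (u.1, u.2 - a) := rfl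

theorem sh_eb (a : ZMod r) (j : Fin D) (k : ZMod r) : sh a (eb (j, k)) = eb (j, k + a) := by
  funext u
  rcases u with ⟨j', k'⟩
  simp [sh_apply, eb, Pi.single_apply, sub_eq_iff_eq_add]

/-- the cyclic shift on the target algebra -/
noncomputable def ta (a : ZMod r) : LA D r →ₐ[ZMod r] LA D r := ExteriorAlgebra.map (sh a)

theorem ta_ta (a b : ZMod r) (x : LA D r) : ta a (ta b x) = ta (a + b) x := by
  have : (ta a).comp (ta b) = ta (D := D) (a + b) := by
    rw [ta, ta, ExteriorAlgebra.map_comp_map, ta]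
    congr 1
    ext1 u
    ext w
    simp [sh_apply, sub_sub]
  rw [← this]; rfl

theorem ta_zero (x : LA D r) : ta 0 x = x := by
  have : (sh 0 : LV D r →ₗ[ZMod r] LV D r) = LinearMap.id := by
    apply LinearMap.ext; intro v; funext u; simp [sh_apply]
  rw [ta, this, ExteriorAlgebra.map_id]; rfl

theorem ta_bdA (a : ZMod r) (x : LA D r) : bdA (ta a x) = ta a (bdA x) := by
  have : (aug ∘ₗ sh a : Module.Dual (ZMod r) (LV D r)) = aug := by
    apply LinearMap.ext
    intro v
    rw [LinearMap.comp_apply, aug_apply, aug_apply]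
    refine Fintype.sum_equiv ((Equiv.refl _).prodCongr (Equiv.subRight a)) _ _ ?_
    intro u; rfl
  rw [bdA, ta, con_map, this]

theorem conL_map {R M M' : Type*} [CommRing R] [AddCommGroup M] [Module R M] [AddCommGroup M']
    [Module R M'] (l : List (Module.Dual R M')) (T : M →ₗ[R] M') (x : ExteriorAlgebra R M) :
    conL l (ExteriorAlgebra.map T x) =
      ExteriorAlgebra.map T (conL (l.map fun φ => φ ∘ₗ T) x) := by
  induction l generalizing x with
  | nil => rfl
  | cons φ l ih => rw [conL_cons, con_map, ih, List.map_cons, conL_cons]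

theorem ta_CL (a : ZMod r) (x : LA D r) (hx : x ∈ CL D r) : ta a x ∈ CL D r := by
  rw [mem_CL'] at *
  intro j
  rw [ta, conL_map, List.map_map]
  have : ((fun φ => φ ∘ₗ sh a) ∘ fun k => co (j, k)) =
      (fun k => co (D := D) (j, k)) ∘ fun k : ZMod r => k - a := by
    funext k; rfl
  rw [this, ← List.map_map]
  have hp : ((Finset.univ : Finset (ZMod r)).toList.map fun k : ZMod r => k - a).Perm
      (Finset.univ : Finset (ZMod r)).toList := by
    refine (List.perm_ext_iff_of_nodup ?_ (Finset.nodup_toList _)).2 ?_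
    · exact (Finset.nodup_toList _).map (fun x y h => by simpa using h)
    · intro k; simp only [List.mem_map, Finset.mem_toList, Finset.mem_univ, true_and, iff_true]
      exact ⟨k + a, by simp⟩
  rw [(conL_perm (hp.map _) x).2 (hx j), map_zero]

theorem ta_Gr (a : ZMod r) {n : ℤ} (x : LA D r) (hx : x ∈ Gr (ZMod r) (LV D r) n) :
    ta a x ∈ Gr (ZMod r) (LV D r) n := map_mem_Gr _ _ hx

theorem top_inv (a : ZMod r) (x : LA D r) (hx : x ∈ CL D r)
    (hn : x ∈ Gr (ZMod r) (LV D r) (D * (r - 1) : ℕ)) (hb : bdA x = 0) : ta a x = x := by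
  obtain ⟨c, hc⟩ := top_cycle x hx hn hb
  obtain ⟨c', hc'⟩ := top_cycle (ta a x) (ta_CL a x hx) (ta_Gr a x hn) (by rw [ta_bdA, hb, map_zero])
  by_cases h0 : c = 0
  · have : x = 0 := by rw [hc, h0, zero_smul]
    rw [this, map_zero]
  · have e : ta a x = (c' * c⁻¹) • x := by
      rw [hc', hc, smul_smul, mul_assoc, inv_mul_cancel₀ h0, mul_one]
    generalize c' * c⁻¹ = b at e
    have it : ∀ n : ℕ, ta ((n : ZMod r) * a) x = b ^ n • x := by
      intro n
      induction n with
      | zero => simp [ta_zero]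
      | succ n ih =>
        rw [Nat.cast_succ, add_mul, one_mul, ← ta_ta, e, map_smul, ih, smul_smul, pow_succ']
    have := it r
    rw [ZMod.natCast_self, zero_mul, ta_zero, ZMod.pow_card] at this
    rw [e, ← this]

end Cols
end CTv

namespace CTv

section Chains
variable (R : Type*) [CommRing R] {X Y : Type*}

/-- ordered chains -/
abbrev Ch (R : Type*) [CommRing R] (X : Type*) := List X →₀ R

variable {R}

/-- basis chain -/
noncomputable def sg (R : Type*) [CommRing R] {X : Type*} (l : List X) : Ch R X := Finsupp.single l 1

/-- linear extension -/
noncomputable def lx {M : Type*} [AddCommGroup M] [Module R M] (g : List X → M) : Ch R X →ₗ[R] M :=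
  Finsupp.linearCombination R g

theorem lx_sg {M : Type*} [AddCommGroup M] [Module R M] (g : List X → M) (l : List X) :
    lx g (sg R l) = g l := by
  simp [lx, sg]

theorem ch_ext {M : Type*} [AddCommGroup M] [Module R M] {S T : Ch R X →ₗ[R] M}
    (h : ∀ l, S (sg R l) = T (sg R l)) (x : Ch R X) : S x = T x := by
  have : S = T := Finsupp.lhom_ext' fun l => LinearMap.ext_ring (h l)
  rw [this]

/-- chains supported on lists with a property -/
noncomputable def sup (R : Type*) [CommRing R] {X : Type*} (P : List X → Prop) :
    Submodule R (Ch R X) := Submodule.span R {x | ∃ l, P l ∧ x = sg R l}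

theorem sg_mem {P : List X → Prop} {l : List X} (h : P l) : sg R l ∈ sup R P :=
  Submodule.subset_span ⟨l, h, rfl⟩

theorem sup_le {P : List X → Prop} {M : Type*} [AddCommGroup M] [Module R M]
    (T : Ch R X →ₗ[R] M) (S : Submodule R M) (h : ∀ l, P l → T (sg R l) ∈ S) {x}
    (hx : x ∈ sup R P) : T x ∈ S := by
  have : sup R P ≤ S.comap T := by
    refine Submodule.span_le.2 ?_
    rintro _ ⟨l, hl, rfl⟩
    exact h l hl
  exact this hx

theorem sup_eq {P : List X → Prop} {M : Type*} [AddCommGroup M] [Module R M]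
    (S T : Ch R X →ₗ[R] M) (h : ∀ l, P l → T (sg R l) = S (sg R l)) {x}
    (hx : x ∈ sup R P) : T x = S x := by
  have := sup_le (T - S) ⊥ (fun l hl => by simp [h l hl]) hx
  rw [Submodule.mem_bot, LinearMap.sub_apply, sub_eq_zero] at this
  exact this

theorem sup_mono {P Q : List X → Prop} (h : ∀ l, P l → Q l) : sup R P ≤ sup R Q := by
  intro x hx
  exact sup_le LinearMap.id (sup R Q) (fun l hl => sg_mem (h l hl)) hx

/-- prepend a vertex -/
noncomputable def cns (a : X) : Ch R X →ₗ[R] Ch R X := lx fun l => sg R (a :: l)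

theorem cns_sg (a : X) (l : List X) : cns a (sg R l) = sg R (a :: l) := lx_sg _ _

noncomputable def bdL (R : Type*) [CommRing R] {X : Type*} : List X → Ch R X
  | [] => 0
  | a :: l => sg R l - cns a (bdL R l)

/-- boundary -/
noncomputable def bd : Ch R X →ₗ[R] Ch R X := lx (bdL R)

theorem bd_sg (l : List X) : bd (sg R l) = bdL R l := lx_sg _ _

theorem bd_cns (a : X) (x : Ch R X) : bd (cns a x) = x - cns a (bd x) := by
  have := ch_ext (S := bd ∘ₗ cns a) (T := LinearMap.id - cns a ∘ₗ bd) (fun l => by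
    simp [cns_sg, bd_sg, bdL]) x
  simpa using this

theorem bd_bdL (l : List X) : bd (bdL R l) = 0 := by
  induction l with
  | nil => simp [bdL]
  | cons a l ih => rw [bdL, map_sub, bd_sg, bd_cns, ih, map_zero]; abel

theorem bd_bd (x : Ch R X) : bd (bd x) = 0 := by
  have := ch_ext (S := bd ∘ₗ bd) (T := (0 : Ch R X →ₗ[R] Ch R X)) (fun l => by
    simp [bd_sg, bd_bdL]) x
  simpa using this

theorem bdL_mem (l : List X) : bdL R l ∈ sup R fun l' => l'.Sublist l ∧ l'.length + 1 = l.length := by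
  induction l with
  | nil => exact zero_mem _
  | cons a l ih =>
    rw [bdL]
    refine sub_mem (sg_mem ⟨List.sublist_cons_self a l, by simp⟩) ?_
    refine sup_le _ _ (fun l' hl' => ?_) ih
    rw [cns_sg]
    exact sg_mem ⟨hl'.1.cons_cons a, by simp [hl'.2]⟩

theorem bdL_eq (l : List X) :
    bdL R l = ∑ k ∈ Finset.range l.length, (-1 : R) ^ k • sg R (l.eraseIdx k) := by
  induction l with
  | nil => simp [bdL]
  | cons a l ih =>
    rw [bdL, List.length_cons, Finset.sum_range_succ', ih, map_sum]
    simp only [map_smul, cns_sg, List.eraseIdx_cons_succ, pow_succ, pow_zero, one_smul,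
      List.eraseIdx_cons_zero, mul_neg, mul_one, neg_smul, Finset.sum_neg_distrib]
    abel

/-- induced map -/
noncomputable def mp (g : X → Y) : Ch R X →ₗ[R] Ch R Y := lx fun l => sg R (l.map g)

theorem mp_sg (g : X → Y) (l : List X) : mp g (sg R l) = sg R (l.map g) := lx_sg _ _

theorem mp_cns (g : X → Y) (a : X) (x : Ch R X) : mp g (cns a x) = cns (g a) (mp g x) := by
  have := ch_ext (S := mp g ∘ₗ cns a) (T := cns (g a) ∘ₗ mp g) (fun l => by
    simp [cns_sg, mp_sg]) x
  simpa using this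

theorem mp_bd (g : X → Y) (x : Ch R X) : mp g (bd x) = bd (mp g x) := by
  have := ch_ext (S := mp g ∘ₗ bd) (T := bd ∘ₗ mp g) (fun l => by
    simp only [LinearMap.comp_apply, bd_sg, mp_sg]
    induction l with
    | nil => simp [bdL]
    | cons a l ih => rw [bdL, map_sub, mp_sg, mp_cns, ih, List.map_cons, bdL]) x
  simpa using this

end Chains

section Lab
variable {D r : ℕ} [Fact r.Prime] {X : Type*}

/-- chain map induced by a vector labelling -/
noncomputable def Lab (ℓ : X → LV D r) : Ch (ZMod r) X →ₗ[ZMod r] LA D r :=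
  lx fun l => pr (l.map ℓ)

theorem Lab_sg (ℓ : X → LV D r) (l) : Lab ℓ (sg _ l) = pr (l.map ℓ) := lx_sg _ _

theorem Lab_cns (ℓ : X → LV D r) (a : X) (x : Ch (ZMod r) X) :
    Lab ℓ (cns a x) = ExteriorAlgebra.ι _ (ℓ a) * Lab ℓ x := by
  have := ch_ext (S := Lab ℓ ∘ₗ cns a) (T := LinearMap.mulLeft _ (ExteriorAlgebra.ι _ (ℓ a)) ∘ₗ Lab ℓ)
    (fun l => by simp [cns_sg, Lab_sg, pr_cons]) x
  simpa using this

theorem Lab_bd (ℓ : X → LV D r) (h : ∀ a, aug (ℓ a) = 1) (x : Ch (ZMod r) X) :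
    bdA (Lab ℓ x) = Lab ℓ (bd x) := by
  have := ch_ext (S := bdA ∘ₗ Lab ℓ) (T := Lab ℓ ∘ₗ bd) (fun l => by
    simp only [LinearMap.comp_apply, bd_sg, Lab_sg]
    induction l with
    | nil => simp [bdL, pr_nil, bdA, con_one]
    | cons a l ih =>
      rw [List.map_cons, pr_cons, bdL, map_sub, Lab_cns, ← ih, Lab_sg, bdA, con_ι_mul, h, one_smul]) x
  simpa using this

theorem Lab_Gr (ℓ : X → LV D r) (l) : Lab ℓ (sg _ l) ∈ Gr (ZMod r) (LV D r) l.length := by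
  rw [Lab_sg]; exact pr_mem_Gr _ _ (by simp)

theorem Lab_CL (ℓ : X → LV D r) (l : List X) (h : ∀ j : Fin D, ∃ k : ZMod r, ∀ a ∈ l, ℓ a (j, k) = 0) :
    Lab ℓ (sg _ l) ∈ CL D r := by
  rw [Lab_sg, mem_CL']
  intro j
  obtain ⟨k, hk⟩ := h j
  refine conL_kill (co (j, k)) _ (List.mem_map.2 ⟨k, by simp, rfl⟩) _ (con_pr _ _ ?_)
  intro v hv
  obtain ⟨a, ha, rfl⟩ := List.mem_map.1 hv
  exact hk a ha

end Lab
end CTv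

namespace CTv
section Homot
variable {D r : ℕ} [Fact r.Prime] {X : Type*}

/-- choice of a filling -/
noncomputable def fillc (n : ℕ) (x : LA D r) : LA D r :=
  if h : ∃ y ∈ CL D r, y ∈ Gr (ZMod r) (LV D r) ((n : ℤ) + 1) ∧ bdA y = x then h.choose else 0

theorem fillc_spec (n : ℕ) (hn : n < D * (r - 1)) (x : LA D r) (hx : x ∈ CL D r)
    (hg : x ∈ Gr (ZMod r) (LV D r) (n : ℤ)) (hb : bdA x = 0) :
    fillc n x ∈ CL D r ∧ fillc n x ∈ Gr (ZMod r) (LV D r) ((n : ℤ) + 1) ∧ bdA (fillc n x) = x := by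
  have h := fill_exists (n : ℤ) (by exact_mod_cast hn) x hx hg hb
  unfold fillc
  rw [dif_pos h]
  exact h.choose_spec

theorem homot (s : ZMod r → X → X) (fs : X → ZMod r) (hfs : ∀ a x, fs (s a x) = fs x + a)
    (P : List X → Prop) (hsub : ∀ l l', P l → l'.Sublist l → P l')
    (hsh : ∀ a l, P l → P (l.map (s a)))
    (S : Ch (ZMod r) X →ₗ[ZMod r] LA D r)
    (hS0 : S (sg _ []) = 0)
    (hSb : ∀ l, P l → bdA (S (sg _ l)) = S (bdL _ l))
    (hSs : ∀ a l, P l → S (sg _ (l.map (s a))) = ta a (S (sg _ l)))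
    (hSC : ∀ l, P l → S (sg _ l) ∈ CL D r)
    (hSG : ∀ l, P l → S (sg _ l) ∈ Gr (ZMod r) (LV D r) l.length)
    (n : ℕ) (hn : n ≤ D * (r - 1)) :
    ∃ h : Ch (ZMod r) X →ₗ[ZMod r] LA D r, ∀ l, P l → l.length = n →
      S (sg _ l) - h (bdL _ l) ∈ CL D r ∧
      S (sg _ l) - h (bdL _ l) ∈ Gr (ZMod r) (LV D r) (n : ℤ) ∧
      bdA (S (sg _ l) - h (bdL _ l)) = 0 ∧
      ∀ a, S (sg _ (l.map (s a))) - h (bdL _ (l.map (s a))) = ta a (S (sg _ l) - h (bdL _ l)) := by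
  induction n with
  | zero =>
    refine ⟨0, fun l hl h0 => ?_⟩
    have : l = [] := List.length_eq_zero_iff.1 h0
    subst this
    simp [hS0]
  | succ n ih =>
    obtain ⟨h, hh⟩ := ih (by omega)
    let E : List X → LA D r := fun l => S (sg _ l) - h (bdL _ l)
    let g : List X → LA D r := fun l => match l with
      | [] => 0
      | x :: l => ta (fs x) (fillc n (ta (-fs x) (E (x :: l))))
    have gprop : ∀ l, P l → l.length = n → g l ∈ CL D r ∧
        g l ∈ Gr (ZMod r) (LV D r) ((n : ℤ) + 1) ∧ bdA (g l) = E l ∧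
        ∀ a, g (l.map (s a)) = ta a (g l) := by
      intro l hl hln
      cases l with
      | nil =>
        have : E [] = 0 := by simp [E, hS0, bdL]
        simp [g, this]
      | cons x l =>
        obtain ⟨h1, h2, h3, h4⟩ := hh _ hl hln
        obtain ⟨f1, f2, f3⟩ := fillc_spec n (by omega) (ta (-fs x) (E (x :: l))) (ta_CL _ _ h1)
          (ta_Gr _ _ h2) (by rw [ta_bdA]; erw [h3]; rw [map_zero])
        refine ⟨ta_CL _ _ f1, ta_Gr _ _ f2, ?_, ?_⟩
        · change bdA (ta _ _) = _
          rw [ta_bdA, f3, ta_ta, add_neg_cancel, ta_zero]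
        · intro a
          have e : E (s a x :: l.map (s a)) = ta a (E (x :: l)) := h4 a
          change ta (fs (s a x)) (fillc n (ta (-fs (s a x)) (E (s a x :: l.map (s a))))) = ta a (ta _ _)
          rw [e, ta_ta, ta_ta, hfs, show -(fs x + a) + a = -fs x by ring, add_comm (fs x) a]
    have key : ∀ l, P l → l.length = n + 1 →
        bdL (ZMod r) l ∈ sup (ZMod r) fun l' => P l' ∧ l'.length = n := by
      intro l hl hln
      refine sup_mono ?_ (bdL_mem l)
      rintro l' ⟨h1, h2⟩
      exact ⟨hsub _ _ hl h1, by omega⟩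
    refine ⟨lx g, fun l hl hln => ⟨?_, ?_, ?_, ?_⟩⟩
    · refine sub_mem (hSC l hl) (sup_le _ _ ?_ (key l hl hln))
      rintro l' ⟨h1, h2⟩
      rw [lx_sg]
      exact (gprop l' h1 h2).1
    · refine sub_mem (by simpa [hln] using hSG l hl) (sup_le _ _ ?_ (key l hl hln))
      rintro l' ⟨h1, h2⟩
      rw [lx_sg]
      exact_mod_cast (gprop l' h1 h2).2.1
    · have : (bdA ∘ₗ lx g) (bdL (ZMod r) l) = (S - h ∘ₗ bd) (bdL (ZMod r) l) := by
        refine sup_eq _ _ ?_ (key l hl hln)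
        rintro l' ⟨h1, h2⟩
        simp only [LinearMap.comp_apply, lx_sg, LinearMap.sub_apply, bd_sg]
        exact (gprop l' h1 h2).2.2.1
      simp only [LinearMap.comp_apply, LinearMap.sub_apply, bd_bdL, map_zero, sub_zero] at this
      rw [map_sub, this, hSb l hl, sub_self]
    · intro a
      have e : bdL (ZMod r) (l.map (s a)) = mp (s a) (bdL _ l) := by
        rw [← bd_sg, ← bd_sg, mp_bd, mp_sg]
      have : (lx g ∘ₗ mp (s a)) (bdL (ZMod r) l) = ((ta a).toLinearMap ∘ₗ lx g) (bdL (ZMod r) l) := by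
        refine sup_eq _ _ ?_ (key l hl hln)
        rintro l' ⟨h1, h2⟩
        simp only [LinearMap.comp_apply, lx_sg, mp_sg]
        exact (gprop l' h1 h2).2.2.2 a
      simp only [LinearMap.comp_apply, AlgHom.toLinearMap_apply] at this
      rw [e, this, map_sub, hSs a l hl]

end Homot
end CTv

namespace CTv
section Core
variable {D r : ℕ} [Fact r.Prime] {V : Type*}

theorem Lab_map {X : Type*} (ℓ : X → LV D r) (g : X → X) (a : ZMod r)
    (l : List X) (h : ∀ x ∈ l, ℓ (g x) = sh a (ℓ x)) :
    Lab ℓ (sg _ (l.map g)) = ta a (Lab ℓ (sg _ l)) := by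
  rw [Lab_sg, Lab_sg, ta, map_pr, List.map_map, List.map_map]
  congr 1
  exact List.map_congr_left h

/-- tuples of permutations -/
abbrev Pm (D r : ℕ) := Fin D → Equiv.Perm (ZMod r)

noncomputable def sn (σ : Equiv.Perm (ZMod r)) : ZMod r := ((Equiv.Perm.sign σ : ℤ) : ZMod r)

theorem sn_mul (σ τ : Equiv.Perm (ZMod r)) : sn (σ * τ) = sn σ * sn τ := by
  simp [sn]

theorem sn_sq (σ : Equiv.Perm (ZMod r)) : sn σ * sn σ = 1 := by
  rcases Int.units_eq_one_or (Equiv.Perm.sign σ) with h | h <;> simp [sn, h]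

theorem sn_swap (k : ZMod r) (hk : k ≠ 0) : sn (Equiv.swap k 0) = -1 := by
  simp [sn, Equiv.Perm.sign_swap hk]

theorem addRight_pow (a : ZMod r) (n : ℕ) : (Equiv.addRight a) ^ n = Equiv.addRight (n * a) := by
  induction n with
  | zero => ext; simp
  | succ n ih => rw [pow_succ, ih]; ext x; simp; ring_nf

theorem sn_addRight (a : ZMod r) : sn (Equiv.addRight a) = 1 := by
  have h1 : sn (Equiv.addRight a) ^ r = sn (Equiv.addRight a) := ZMod.pow_card _
  have h2 : sn (Equiv.addRight a) ^ r = sn ((Equiv.addRight a) ^ r) := by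
    simp only [sn, map_pow, Units.val_pow_eq_pow_val, Int.cast_pow]
  rw [addRight_pow] at h2
  rw [← h1, h2]
  simp [sn]

noncomputable def sgn (π : Pm D r) : ZMod r := ∏ j, sn (π j)

theorem sgn_update (π : Pm D r) (j : Fin D) (k : ZMod r) (hk : k ≠ 0) :
    sgn (Function.update π j (π j * Equiv.swap k 0)) = - sgn π := by
  unfold sgn
  rw [← Finset.mul_prod_erase _ _ (Finset.mem_univ j), ← Finset.mul_prod_erase _ (fun j => sn (π j)) (Finset.mem_univ j)]
  rw [Function.update_self, sn_mul, sn_swap k hk]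
  rw [Finset.prod_congr rfl (g := fun j => sn (π j))]
  · ring
  · intro x hx
    rw [Function.update_of_ne (Finset.ne_of_mem_erase hx)]

noncomputable def rows (D r : ℕ) [Fact r.Prime] : List (Fin D × ZMod r) :=
  (Finset.univ.filter fun u : Fin D × ZMod r => u.2 ≠ 0).toList

theorem mem_rows (u : Fin D × ZMod r) : u ∈ rows D r ↔ u.2 ≠ 0 := by simp [rows]
theorem nodup_rows : (rows D r).Nodup := Finset.nodup_toList _
theorem length_rows : (rows D r).length = D * (r - 1) := by
  rw [rows, Finset.length_toList, Finset.card_filter, Fintype.sum_prod_type]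
  have : (∑ y : ZMod r, if y ≠ 0 then 1 else 0) = r - 1 := by
    rw [← Finset.card_filter, Finset.filter_ne', Finset.card_erase_of_mem (Finset.mem_univ _)]
    simp [ZMod.card]
  simp only [this]
  simp

noncomputable def lpi (row : Fin D → ZMod r → V) (π : Pm D r) : List (ZMod r × V) :=
  (rows D r).map fun u => (π u.1 u.2, row u.1 u.2)

noncomputable def zM (row : Fin D → ZMod r → V) : Ch (ZMod r) (ZMod r × V) :=
  ∑ π : Pm D r, sgn π • sg _ (lpi row π)

theorem bd_zM (row : Fin D → ZMod r → V) : bd (zM row) = 0 := by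
  rw [zM, map_sum]
  simp only [map_smul, bd_sg, bdL_eq, Finset.smul_sum]
  have hl : ∀ π : Pm D r, (lpi row π).length = (rows D r).length := fun π => by simp [lpi]
  simp only [hl]
  rw [Finset.sum_comm]
  refine Finset.sum_eq_zero fun k hk => ?_
  have hk' : k < (rows D r).length := Finset.mem_range.1 hk
  set u := (rows D r)[k] with hu
  have hu0 : u.2 ≠ 0 := (mem_rows u).1 (List.getElem_mem hk')
  have key : ∀ π : Pm D r, (lpi row (Function.update π u.1 (π u.1 * Equiv.swap u.2 0))).eraseIdx k
      = (lpi row π).eraseIdx k := by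
    intro π
    unfold lpi
    rw [List.eraseIdx_map, List.eraseIdx_map]
    refine List.map_congr_left fun w hw => ?_
    rw [List.mem_eraseIdx_iff_getElem] at hw
    obtain ⟨i, hi, hne, rfl⟩ := hw
    have hw0 : (rows D r)[i].2 ≠ 0 := (mem_rows _).1 (List.getElem_mem hi)
    have hwu : (rows D r)[i] ≠ u := by
      intro h
      exact hne ((List.Nodup.getElem_inj_iff nodup_rows).1 h)
    refine Prod.ext ?_ rfl
    by_cases h1 : (rows D r)[i].1 = u.1
    · have h2 : (rows D r)[i].2 ≠ u.2 := fun h2 => hwu (Prod.ext h1 h2)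
      simp only [h1, Function.update_self, Equiv.Perm.mul_apply]
      rw [Equiv.swap_apply_of_ne_of_ne h2 hw0]
    · simp only [Function.update_of_ne h1]
  refine Finset.sum_involution (fun π _ => Function.update π u.1 (π u.1 * Equiv.swap u.2 0)) ?_ ?_ ?_ ?_
  · intro π _
    rw [key, sgn_update _ _ _ hu0, neg_smul, add_neg_cancel]
  · intro π _ _ h
    have := congrFun h u.1
    rw [Function.update_self, mul_eq_left, Equiv.swap_eq_one_iff] at this
    exact hu0 this
  · intro π _; exact Finset.mem_univ _
  · intro π _
    simp [mul_assoc]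

/-- translation action -/
def tr (a : ZMod r) (π : Pm D r) : Pm D r := fun j => Equiv.addRight a * π j

theorem sgn_tr (a : ZMod r) (π : Pm D r) : sgn (tr a π) = sgn π := by
  simp [sgn, tr, sn_mul, sn_addRight]

theorem lpi_tr (row : Fin D → ZMod r → V) (a : ZMod r) (π : Pm D r) :
    lpi row (tr a π) = (lpi row π).map fun p => (p.1 + a, p.2) := by
  simp [lpi, tr]

theorem sum_tr {M : Type*} [AddCommGroup M] [Module (ZMod r) M] (hD : 0 < D)
    (F : Pm D r → M) (h : ∀ a π, F (tr a π) = F π) : ∑ π, F π = 0 := by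
  rw [← Finset.sum_fiberwise (s := Finset.univ) (fun π : Pm D r => π ⟨0, hD⟩ 0)]
  have : ∀ b : ZMod r, (∑ π ∈ Finset.univ.filter (fun π : Pm D r => π ⟨0, hD⟩ 0 = b), F π) =
      ∑ π ∈ Finset.univ.filter (fun π : Pm D r => π ⟨0, hD⟩ 0 = 0), F π := by
    intro b
    refine Finset.sum_bij' (fun π _ => tr (-b) π) (fun π _ => tr b π) ?_ ?_ ?_ ?_ ?_
    · intro π hπ
      simp at hπ ⊢
      simp [tr, hπ]
    · intro π hπ
      simp at hπ ⊢
      simp [tr, hπ]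
    · intro π _
      funext j; ext x
      simp [tr]
    · intro π _
      funext j; ext x
      simp [tr]
    · intro π _
      exact (h _ _).symm
  rw [Finset.sum_congr rfl fun b _ => this b]
  rw [Finset.sum_const, ← Nat.cast_smul_eq_nsmul (ZMod r)]
  simp [ZMod.card]

theorem pr_perm (us : List (Fin D × ZMod r)) (hn : us.Nodup) (ha : ∀ u, u ∈ us) (π : Pm D r)
    (v : Fin D × ZMod r → LV D r) :
    pr (R := ZMod r) (us.map fun u => v (u.1, π u.1 u.2)) = sgn π • pr (us.map v) := by
  have hpr : ∀ w : Fin D × ZMod r → LV D r,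
      pr (R := ZMod r) (us.map w) = ExteriorAlgebra.ιMulti (ZMod r) us.length (fun i => w (us.get i)) := by
    intro w
    rw [ExteriorAlgebra.ιMulti_apply]
    unfold pr
    congr 1
    rw [List.map_map]
    conv_lhs => rw [← List.ofFn_get us, List.map_ofFn]
    rfl
  let e := List.Nodup.getEquivOfForallMemList us hn ha
  let g := (ExteriorAlgebra.ιMulti (ZMod r) us.length (M := LV D r)).domDomCongr e
  have hg : ∀ w : Fin D × ZMod r → LV D r, pr (R := ZMod r) (us.map w) = g w := by
    intro w
    rw [hpr]; rfl
  rw [hg, hg]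
  have := g.map_perm v (Equiv.prodCongrRight π)
  have h2 : (fun u : Fin D × ZMod r => v (u.1, π u.1 u.2)) = v ∘ (Equiv.prodCongrRight π) := by
    funext u; rfl
  rw [h2, this]
  rw [Equiv.Perm.sign_prodCongrRight]
  have h3 : sgn π = (((∏ k, Equiv.Perm.sign (π k) : ℤˣ) : ℤ) : ZMod r) := by
    simp [sgn, sn]
  rw [h3, Int.cast_smul_eq_zsmul]
  rfl

theorem pr_top_ne (us : List (Fin D × ZMod r)) (hn : us.Nodup) : pr (us.map eb) ≠ (0 : LA D r) := by
  have key : conL (us.map co) (pr (us.map eb)) = (1 : LA D r) := by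
    induction us with
    | nil => simp [conL_nil, pr_nil]
    | cons u us ih =>
      rw [List.nodup_cons] at hn
      rw [List.map_cons, conL_cons, List.map_cons, pr_cons, con_ι_mul, co_eb, if_pos rfl,
        con_pr, mul_zero, sub_zero, one_smul]
      · exact ih hn.2
      · intro v hv
        obtain ⟨k', hk', rfl⟩ := List.mem_map.1 hv
        rw [co_eb, if_neg]
        rintro rfl
        exact hn.1 hk'
  intro h
  rw [h, map_zero] at key
  exact zero_ne_one key

theorem card_fix : ((Finset.univ.filter fun p : Equiv.Perm (ZMod r) => p 0 = 0).card : ZMod r) = -1 := by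
  have : (Finset.univ.filter fun p : Equiv.Perm (ZMod r) => p 0 = 0).card = Nat.factorial (r - 1) := by
    rw [← Fintype.card_subtype]
    have e := Equiv.Perm.subtypeEquivSubtypePerm (fun a : ZMod r => a ≠ 0)
    have h := Fintype.card_congr e
    rw [Fintype.card_perm] at h
    have h2 : Fintype.card {a : ZMod r // a ≠ 0} = r - 1 := by
      rw [Fintype.card_subtype, Finset.filter_ne', Finset.card_erase_of_mem (Finset.mem_univ _)]
      simp [ZMod.card]
    rw [h2] at h
    rw [h]
    refine Fintype.card_congr (Equiv.subtypeEquivRight fun f => ?_)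
    simp
  rw [this, ZMod.wilsons_lemma]

theorem G_zM_ne (row : Fin D → ZMod r → V) (G : Ch (ZMod r) (ZMod r × V) →ₗ[ZMod r] LA D r)
    (hG : ∀ π, G (sg _ (lpi row π)) = pr ((rows D r).map fun u => eb (u.1, π u.1 u.2))) :
    G (zM row) ≠ 0 := by
  intro h0
  let st : List (Fin D × ZMod r) := (Finset.univ : Finset (Fin D)).toList.map fun j => (j, 0)
  have hst : ∀ u, u ∈ st ↔ u.2 = 0 := by
    intro u
    simp only [st, List.mem_map, Finset.mem_toList, Finset.mem_univ, true_and]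
    constructor
    · rintro ⟨j, rfl⟩; rfl
    · intro h; exact ⟨u.1, Prod.ext rfl h.symm⟩
  have hnd : (st ++ rows D r).Nodup := by
    rw [List.nodup_append]
    refine ⟨(Finset.nodup_toList _).map fun a b h => (Prod.ext_iff.1 h).1, nodup_rows, ?_⟩
    rintro a ha b hb rfl
    exact (mem_rows a).1 hb ((hst a).1 ha)
  have hall : ∀ u, u ∈ st ++ rows D r := by
    intro u
    rw [List.mem_append, hst, mem_rows]
    exact em _
  have happ : ∀ l l' : List (LV D r), pr (R := ZMod r) l * pr l' = pr (l ++ l') := by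
    intro l l'
    simp [pr]
  have hterm : ∀ π : Pm D r, pr (st.map eb) * (sgn π • G (sg _ (lpi row π))) =
      if (∀ j, π j 0 = 0) then pr ((st ++ rows D r).map eb) else (0 : LA D r) := by
    intro π
    rw [hG, mul_smul_comm, happ]
    split_ifs with h
    · have : st.map eb = st.map fun u => (eb (u.1, π u.1 u.2) : LV D r) := by
        refine List.map_congr_left fun u hu => ?_
        rw [(hst u).1 hu, h, ← (hst u).1 hu]
      rw [this, ← List.map_append, pr_perm _ hnd hall, smul_smul]
      have : sgn π * sgn π = 1 := by
        rw [sgn, ← Finset.prod_mul_distrib]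
        simp [sn_sq]
      rw [this, one_smul]
    · push Not at h
      obtain ⟨j, hj⟩ := h
      have hz : pr (R := ZMod r) (st.map eb ++ (rows D r).map fun u => eb (u.1, π u.1 u.2)) = 0 := by
        have hmem : eb (j, (0 : ZMod r)) ∈ (rows D r).map fun u => eb (u.1, π u.1 u.2) := by
          refine List.mem_map.2 ⟨(j, (π j).symm 0), ?_, by simp⟩
          rw [mem_rows]
          intro h
          apply hj
          have : (π j).symm 0 = 0 := h
          have h' := (π j).apply_symm_apply 0
          rwa [this] at h'
        have hmem2 : eb (j, (0 : ZMod r)) ∈ st.map eb := List.mem_map.2 ⟨_, (hst (j, 0)).2 rfl, rfl⟩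
        obtain ⟨l1, l2, e⟩ := List.append_of_mem hmem2
        rw [e, List.append_assoc, ← happ, List.cons_append, pr_cons, ι_mul_pr_mem, mul_zero]
        exact List.mem_append_right _ hmem
      rw [hz, smul_zero]
  have : pr (st.map eb) * G (zM row) = ∑ π : Pm D r, if (∀ j, π j 0 = 0) then
      pr ((st ++ rows D r).map eb) else (0 : LA D r) := by
    rw [zM, map_sum, Finset.mul_sum]
    refine Finset.sum_congr rfl fun π _ => ?_
    rw [map_smul]
    exact hterm π
  rw [h0, mul_zero, ← Finset.sum_filter, Finset.sum_const, ← Nat.cast_smul_eq_nsmul (ZMod r)] at this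
  have hc : (Finset.univ.filter fun π : Pm D r => ∀ j, π j 0 = 0) =
      Fintype.piFinset fun _ : Fin D => Finset.univ.filter fun p : Equiv.Perm (ZMod r) => p 0 = 0 := by
    ext π; simp
  rw [hc, Fintype.card_piFinset, Nat.cast_prod, Finset.prod_congr rfl fun _ _ => card_fix] at this
  rw [Finset.prod_const] at this
  rcases smul_eq_zero.1 this.symm with h | h
  · exact (pow_ne_zero _ (neg_ne_zero.2 one_ne_zero)) h
  · exact pr_top_ne _ hnd h

end Core
end CTv

namespace CTv
section Core2
variable {D r : ℕ} [Fact r.Prime] {V : Type*}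

/-- simplices of the configuration complex -/
def Good (cl : V → Option (Fin D)) (l : List (ZMod r × V)) : Prop :=
  (∀ p ∈ l, ∀ q ∈ l, p.2 = q.2 → p.1 = q.1) ∧
  (∀ p ∈ l, ∀ q ∈ l, p.1 = q.1 → cl p.2 = cl q.2 → p.2 = q.2) ∧ l.Nodup

def shf (a : ZMod r) (p : ZMod r × V) : ZMod r × V := (p.1 + a, p.2)

theorem Good.sub {cl : V → Option (Fin D)} {l l' : List (ZMod r × V)} (h : Good cl l)
    (hl : l'.Sublist l) : Good cl l' :=
  ⟨fun p hp q hq => h.1 p (hl.subset hp) q (hl.subset hq),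
   fun p hp q hq => h.2.1 p (hl.subset hp) q (hl.subset hq), h.2.2.sublist hl⟩

theorem Good.shf {cl : V → Option (Fin D)} {l : List (ZMod r × V)} (h : Good cl l) (a : ZMod r) :
    Good cl (l.map (shf a)) := by
  refine ⟨?_, ?_, ?_⟩
  · intro p hp q hq e
    obtain ⟨p, hp', rfl⟩ := List.mem_map.1 hp
    obtain ⟨q, hq', rfl⟩ := List.mem_map.1 hq
    have := h.1 p hp' q hq' e
    simp [CTv.shf, this]
  · intro p hp q hq e
    obtain ⟨p, hp', rfl⟩ := List.mem_map.1 hp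
    obtain ⟨q, hq', rfl⟩ := List.mem_map.1 hq
    have e' : p.1 = q.1 := by simpa [CTv.shf] using e
    exact h.2.1 p hp' q hq' e'
  · refine h.2.2.map ?_
    rintro ⟨i, v⟩ ⟨i', v'⟩ e
    simpa [CTv.shf] using e

theorem core (hD : 0 < D) (cl : V → Option (Fin D)) (row : Fin D → ZMod r → V)
    (hrow : ∀ j k, k ≠ 0 → cl (row j k) = some j)
    (hinj : ∀ j k k', k ≠ 0 → k' ≠ 0 → row j k = row j k' → k = k')
    (hsurj : ∀ j v, cl v = some j → ∃ k, k ≠ 0 ∧ v = row j k)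
    (pt : V) (hpt : cl pt = none)
    (Φ : Ch (ZMod r) (ZMod r × V) →ₗ[ZMod r] LA D r)
    (h0 : Φ (sg _ []) = 1)
    (hb : ∀ l, Good cl l → bdA (Φ (sg _ l)) = Φ (bdL _ l))
    (hs : ∀ a l, Good cl l → Φ (sg _ (l.map (shf a))) = ta a (Φ (sg _ l)))
    (hC : ∀ l, Good cl l → Φ (sg _ l) ∈ CL D r)
    (hG : ∀ l, Good cl l → Φ (sg _ l) ∈ Gr (ZMod r) (LV D r) l.length) : False := by
  let gl : ZMod r × V → LV D r := fun p => eb ((cl p.2).getD ⟨0, hD⟩, p.1)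
  have gsh : ∀ a p, gl (shf a p) = sh a (gl p) := by
    intro a p
    simp only [gl, sh_eb, shf]
  let P : List (ZMod r × V) → Prop := fun l => Good cl l ∧ ∀ p ∈ l, cl p.2 ≠ none
  have hlpi : ∀ π, P (lpi row π) := by
    intro π
    have hm : ∀ p ∈ lpi row π, ∃ u : Fin D × ZMod r, u.2 ≠ 0 ∧ p = (π u.1 u.2, row u.1 u.2) := by
      intro p hp
      obtain ⟨u, hu, rfl⟩ := List.mem_map.1 hp
      exact ⟨u, (mem_rows u).1 hu, rfl⟩
    refine ⟨⟨?_, ?_, ?_⟩, ?_⟩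
    · intro p hp q hq e
      obtain ⟨⟨j, k⟩, hu, rfl⟩ := hm p hp
      obtain ⟨⟨j', k'⟩, hw, rfl⟩ := hm q hq
      simp only at hu hw e ⊢
      have ej : j = j' := by
        have := hrow j k hu
        rw [e, hrow j' k' hw] at this
        exact (Option.some.inj this).symm
      subst ej
      rw [hinj j k k' hu hw e]
    · intro p hp q hq e e2
      obtain ⟨⟨j, k⟩, hu, rfl⟩ := hm p hp
      obtain ⟨⟨j', k'⟩, hw, rfl⟩ := hm q hq
      simp only at hu hw e e2 ⊢
      rw [hrow j k hu, hrow j' k' hw] at e2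
      have ej : j = j' := Option.some.inj e2
      subst ej
      rw [(π j).injective e]
    · refine nodup_rows.map_on ?_
      rintro ⟨j, k⟩ hu ⟨j', k'⟩ hw e
      rw [mem_rows] at hu hw
      simp only [Prod.mk.injEq] at hu hw e ⊢
      have ej : j = j' := by
        have := hrow j k hu
        rw [e.2, hrow j' k' hw] at this
        exact (Option.some.inj this).symm
      subst ej
      exact ⟨rfl, (π j).injective e.1⟩
    · intro p hp
      obtain ⟨⟨j, k⟩, hu, rfl⟩ := hm p hp
      simp only at hu ⊢
      rw [hrow j k hu]; simp
  have hlen : ∀ π, (lpi row π).length = D * (r - 1) := fun π => by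
    rw [lpi, List.length_map, length_rows]
  obtain ⟨h, hh⟩ := homot (D := D) (r := r) shf Prod.fst (fun a x => rfl) P
    (fun l l' hl hl' => ⟨hl.1.sub hl', fun p hp => hl.2 p (hl'.subset hp)⟩)
    (fun a l hl => ⟨hl.1.shf a, by
      intro p hp
      obtain ⟨p, hp', rfl⟩ := List.mem_map.1 hp
      exact hl.2 p hp'⟩)
    (Φ - Lab gl)
    (by simp [h0, Lab_sg, pr_nil])
    (fun l hl => by
      rw [LinearMap.sub_apply, LinearMap.sub_apply, map_sub, hb l hl.1, Lab_bd _ (fun a => aug_eb _), bd_sg])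
    (fun a l hl => by
      rw [LinearMap.sub_apply, LinearMap.sub_apply, map_sub, hs a l hl.1, Lab_map _ _ a _ (fun x _ => gsh a x)])
    (fun l hl => by
      refine sub_mem (hC l hl.1) (Lab_CL _ _ fun j => ?_)
      by_contra hcon
      push Not at hcon
      have h1 : ∀ k : ZMod r, ∃ p ∈ l, p.1 = k ∧ cl p.2 = some j := by
        intro k
        obtain ⟨p, hp, hne⟩ := hcon k
        refine ⟨p, hp, ?_⟩
        obtain ⟨j', hj'⟩ := Option.ne_none_iff_exists'.1 (hl.2 p hp)
        simp only [gl, eb, hj', Option.getD_some, Pi.single_apply, ne_eq, ite_eq_right_iff,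
          Prod.mk.injEq, Classical.not_imp] at hne
        exact ⟨hne.1.2.symm, by rw [hj', hne.1.1]⟩
      choose p hp hpk hpc using h1
      have h2 : ∀ k, ∃ k', k' ≠ 0 ∧ (p k).2 = row j k' := fun k => hsurj j _ (hpc k)
      choose g hg0 hg using h2
      have gi : Function.Injective g := by
        intro a b hab
        have : (p a).2 = (p b).2 := by rw [hg, hg, hab]
        have := hl.1.1 _ (hp a) _ (hp b) this
        rwa [hpk, hpk] at this
      obtain ⟨a, ha⟩ := (Finite.injective_iff_surjective.1 gi) 0
      exact hg0 a ha)
    (fun l hl => sub_mem (hG l hl.1) (Lab_Gr _ _))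
    (D * (r - 1)) le_rfl
  -- the difference vanishes on the fundamental cycle
  have hdiff : (Φ - Lab gl) (zM row) = 0 := by
    have e1 : (Φ - Lab gl) (zM row) = ((Φ - Lab gl) - h ∘ₗ bd) (zM row) := by
      rw [LinearMap.sub_apply _ (h ∘ₗ bd), LinearMap.comp_apply, bd_zM, map_zero, sub_zero]
    rw [e1]
    set T := (Φ - Lab gl) - h ∘ₗ bd with hT
    have hTl : ∀ l, T (sg _ l) = (Φ - Lab gl) (sg _ l) - h (bdL _ l) := by
      intro l
      rw [hT, LinearMap.sub_apply _ (h ∘ₗ bd), LinearMap.comp_apply, bd_sg]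
    rw [zM, map_sum]
    refine sum_tr hD _ fun a π => ?_
    rw [map_smul, map_smul, sgn_tr, lpi_tr]
    congr 1
    obtain ⟨q1, q2, q3, q4⟩ := hh _ (hlpi π) (hlen π)
    rw [hTl, hTl]
    refine (q4 a).trans ?_
    exact top_inv a _ q1 q2 q3
  rw [LinearMap.sub_apply, sub_eq_zero] at hdiff
  refine G_zM_ne row (Lab gl) ?_ ?_
  · intro π
    rw [Lab_sg, lpi, List.map_map]
    congr 1
    refine List.map_congr_left fun u hu => ?_
    simp only [gl, Function.comp, hrow u.1 u.2 ((mem_rows u).1 hu), Option.getD_some]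
  · rw [← hdiff]
    have hgood : ∀ π, Good cl ((0, pt) :: lpi row π) := by
      intro π
      have hπ := hlpi π
      have hne : ∀ p ∈ lpi row π, cl p.2 ≠ cl pt := fun p hp => by rw [hpt]; exact hπ.2 p hp
      refine ⟨?_, ?_, ?_⟩
      · intro p hp q hq e
        rcases List.mem_cons.1 hp with rfl | hp <;> rcases List.mem_cons.1 hq with rfl | hq
        · rfl
        · exact absurd (by rw [← e]) (hne q hq)
        · exact absurd (by rw [e]) (hne p hp)
        · exact hπ.1.1 p hp q hq e
      · intro p hp q hq e e2
        rcases List.mem_cons.1 hp with rfl | hp <;> rcases List.mem_cons.1 hq with rfl | hq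
        · rfl
        · exact absurd e2.symm (hne q hq)
        · exact absurd e2 (hne p hp)
        · exact hπ.1.2.1 p hp q hq e e2
      · exact List.nodup_cons.2 ⟨fun hp => hne _ hp rfl, hπ.1.2.2⟩
    have e1 : Φ (bd (cns (0, pt) (zM row))) = Φ (zM row) := by
      rw [bd_cns, bd_zM, map_zero, sub_zero]
    rw [← e1, zM, map_sum, map_sum, map_sum]
    refine Finset.sum_eq_zero fun π _ => ?_
    rw [map_smul, map_smul, map_smul, cns_sg, bd_sg, ← hb _ (hgood π)]
    rw [CL_top (D * (r - 1) + 1) (by omega) _ (hC _ (hgood π)), map_zero, smul_zero]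
    have := hG _ (hgood π)
    rwa [List.length_cons, hlen] at this

end Core2
end CTv

namespace CTv
section Subdiv
variable {R : Type*} [CommRing R] {Y Z : Type*} [NormedAddCommGroup Y] [NormedSpace ℝ Y]
  [NormedAddCommGroup Z] [NormedSpace ℝ Z]

/-- barycenter -/
noncomputable def bc (l : List Y) : Y := ((l.length : ℝ)⁻¹) • l.sum

noncomputable def sdN (R : Type*) [CommRing R] : ℕ → (Ch R Y →ₗ[R] Ch R Y)
  | 0 => LinearMap.id
  | n + 1 => lx fun l => cns (bc l) (sdN R n (bdL R l))

/-- barycentric subdivision -/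
noncomputable def Sd : Ch R Y →ₗ[R] Ch R Y := lx fun l => sdN R l.length (sg R l)

theorem Sd_nil : Sd (sg R ([] : List Y)) = sg R [] := by
  simp [Sd, lx_sg, sdN]

theorem Sd_len (n : ℕ) (x : Ch R Y) (hx : x ∈ sup R fun l : List Y => l.length = n) :
    Sd x = sdN R n x := by
  refine sup_eq _ _ (fun l hl => ?_) hx
  rw [Sd, lx_sg, hl]

theorem bdL_len (l : List Y) (n : ℕ) (h : l.length = n + 1) :
    bdL R l ∈ sup R fun l' : List Y => l'.length = n :=
  sup_mono (fun l' hl' => by have := hl'.2; omega) (bdL_mem l)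

theorem Sd_cons (l : List Y) (h : l ≠ []) : Sd (sg R l) = cns (bc l) (Sd (bdL R l)) := by
  obtain ⟨n, hn⟩ : ∃ n, l.length = n + 1 := by
    cases l with
    | nil => exact absurd rfl h
    | cons a l => exact ⟨_, rfl⟩
  rw [Sd_len n _ (bdL_len l n hn), Sd, lx_sg, hn, sdN, lx_sg]

theorem Sd_ind {M : Type*} [AddCommGroup M] [Module R M] (S T : Ch R Y →ₗ[R] M)
    (h0 : T (sg R []) = S (sg R []))
    (h : ∀ l : List Y, l ≠ [] → (∀ x ∈ sup R fun l' : List Y => l'.length + 1 = l.length, T x = S x) →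
      T (sg R l) = S (sg R l)) (x : Ch R Y) : T x = S x := by
  refine ch_ext (fun l => ?_) x
  obtain ⟨n, hn⟩ : ∃ n, l.length = n := ⟨_, rfl⟩
  induction n generalizing l with
  | zero =>
    have : l = [] := List.length_eq_zero_iff.1 hn
    subst this
    exact h0
  | succ n ih =>
    refine h l (by rintro rfl; simp at hn) fun x hx => ?_
    refine sup_eq _ _ (fun l' hl' => ?_) hx
    exact ih l' (by omega)

theorem bdL_len' (l : List Y) : bdL R l ∈ sup R fun l' : List Y => l'.length + 1 = l.length :=
  sup_mono (fun _ hl' => hl'.2) (bdL_mem l)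

theorem bd_Sd (x : Ch R Y) : bd (Sd x) = Sd (bd x) := by
  refine Sd_ind (Sd ∘ₗ bd) (bd ∘ₗ Sd) ?_ ?_ x
  · simp [Sd_nil, bd_sg, bdL]
  · intro l hl ih
    have := ih _ (bdL_len' l)
    simp only [LinearMap.comp_apply, bd_bdL, map_zero] at this ⊢
    rw [Sd_cons l hl, bd_cns, this, map_zero, sub_zero, bd_sg]

theorem bc_map (T : Y →ₗ[ℝ] Z) (l : List Y) : bc (l.map T) = T (bc l) := by
  simp [bc, map_list_sum]

theorem mp_Sd (T : Y →ₗ[ℝ] Z) (x : Ch R Y) : mp T (Sd x) = Sd (mp T x) := by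
  refine Sd_ind (Sd ∘ₗ mp T) (mp T ∘ₗ Sd) ?_ ?_ x
  · simp [Sd_nil, mp_sg]
  · intro l hl ih
    have := ih _ (bdL_len' l)
    simp only [LinearMap.comp_apply] at this ⊢
    rw [Sd_cons l hl, mp_cns, this, mp_sg, Sd_cons _ (by simpa using hl), bc_map]
    congr 2
    rw [← bd_sg, ← bd_sg, mp_bd, mp_sg]

theorem sum_sub_norm (l : List Y) (v : Y) (δ : ℝ) (h : ∀ w ∈ l, ‖w - v‖ ≤ δ) :
    ‖l.sum - (l.length : ℝ) • v‖ ≤ l.length * δ := by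
  induction l with
  | nil => simp
  | cons a l ih =>
    have h1 := ih fun w hw => h w (List.mem_cons_of_mem _ hw)
    have h2 := h a (List.mem_cons_self)
    have e : (a :: l).sum - ((a :: l).length : ℝ) • v = (a - v) + (l.sum - (l.length : ℝ) • v) := by
      simp [add_smul]; abel
    rw [e]
    refine (norm_add_le _ _).trans ?_
    simp only [List.length_cons, Nat.cast_add, Nat.cast_one]
    linarith

theorem bc_dist (N : ℕ) (l : List Y) (δ : ℝ) (hδ : 0 ≤ δ) (hl : l.length ≤ N + 1)
    (h : ∀ x ∈ l, ∀ y ∈ l, ‖x - y‖ ≤ δ) (v : Y) (hv : v ∈ l) :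
    ‖bc l - v‖ ≤ (N / (N + 1 : ℝ)) * δ := by
  have hp := List.perm_cons_erase hv
  obtain ⟨n, hn⟩ : ∃ n, l.length = n + 1 := by
    cases l with
    | nil => simp at hv
    | cons a l => exact ⟨_, rfl⟩
  have hlen : (l.erase v).length = n := by rw [List.length_erase_of_mem hv, hn]; simp
  have hs : l.sum = v + (l.erase v).sum := by rw [hp.sum_eq, List.sum_cons]
  have hn0 : (0 : ℝ) < n + 1 := by positivity
  have e : bc l - v = ((n : ℝ) + 1)⁻¹ • ((l.erase v).sum - (n : ℝ) • v) := by
    rw [bc, hn, hs]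
    push_cast
    rw [show v + (l.erase v).sum = ((l.erase v).sum - (n : ℝ) • v) + ((n : ℝ) + 1) • v by
      rw [add_smul, one_smul]; abel]
    rw [smul_add, smul_smul, inv_mul_cancel₀ hn0.ne', one_smul, add_sub_cancel_right]
  have b := sum_sub_norm (l.erase v) v δ (fun w hw => h w (List.mem_of_mem_erase hw) v hv)
  rw [hlen] at b
  rw [e, norm_smul, Real.norm_of_nonneg (by positivity)]
  have hnN : (n : ℝ) ≤ N := by exact_mod_cast (by omega : n ≤ N)
  calc ((n : ℝ) + 1)⁻¹ * ‖(l.erase v).sum - (n : ℝ) • v‖ ≤ ((n : ℝ) + 1)⁻¹ * (n * δ) := by gcongr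
    _ = (n / (n + 1 : ℝ)) * δ := by field_simp
    _ ≤ _ := by
      gcongr ?_ * _
      rw [div_le_div_iff₀ hn0 (by positivity)]
      nlinarith

theorem bc_mem (l : List Y) (h : l ≠ []) (K : Set Y) (hK : Convex ℝ K) (hl : ∀ x ∈ l, x ∈ K) :
    bc l ∈ K := by
  have hpos : 0 < l.length := List.length_pos_iff.2 h
  have e : bc l = ∑ i : Fin l.length, ((l.length : ℝ)⁻¹) • l.get i := by
    rw [bc, ← Finset.smul_sum]
    congr 1
    conv_lhs => rw [← List.ofFn_get l, List.sum_ofFn]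
  rw [e]
  refine hK.sum_mem (fun i _ => by positivity) ?_ fun i _ => hl _ (List.get_mem l i)
  simp
  field_simp

theorem Sd_supp (N : ℕ) (δ : ℝ) (hδ : 0 ≤ δ) (n : ℕ) : ∀ (l : List Y), l.length = n → n ≤ N + 1 →
    (∀ x ∈ l, ∀ y ∈ l, ‖x - y‖ ≤ δ) →
    Sd (sg R l) ∈ sup R fun l' : List Y => l'.length = n ∧ (∀ x ∈ l', x ∈ convexHull ℝ {y | y ∈ l}) ∧
      (∀ x ∈ l', ∀ y ∈ l', ‖x - y‖ ≤ (N / (N + 1 : ℝ)) * δ) := by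
  have hρ : (0 : ℝ) ≤ (N / (N + 1 : ℝ)) * δ := by positivity
  induction n with
  | zero =>
    intro l hl _ _
    have : l = [] := List.length_eq_zero_iff.1 hl
    subst this
    rw [Sd_nil]
    exact sg_mem ⟨rfl, by simp, by simp⟩
  | succ n ih =>
    intro l hl hn hd
    have hne : l ≠ [] := by rintro rfl; simp at hl
    rw [Sd_cons l hne]
    have h1 : Sd (bdL R l) ∈ sup R fun l' : List Y => l'.length = n ∧
        (∀ x ∈ l', x ∈ convexHull ℝ {y | y ∈ l}) ∧
        (∀ x ∈ l', ∀ y ∈ l', ‖x - y‖ ≤ (N / (N + 1 : ℝ)) * δ) := by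
      refine sup_le _ _ ?_ (bdL_mem l)
      rintro l' ⟨hs, hl'⟩
      have := ih l' (by omega) (by omega)
        (fun x hx y hy => hd x (hs.subset hx) y (hs.subset hy))
      refine sup_mono ?_ this
      rintro l'' ⟨a, b, c⟩
      exact ⟨a, fun x hx => convexHull_mono (fun y hy => hs.subset hy) (b x hx), c⟩
    refine sup_le _ _ ?_ h1
    rintro l' ⟨a, b, c⟩
    rw [cns_sg]
    have hball : ∀ x ∈ l', ‖bc l - x‖ ≤ (N / (N + 1 : ℝ)) * δ := by
      intro x hx
      have hsub : convexHull ℝ {y | y ∈ l} ⊆ Metric.closedBall (bc l) ((N / (N + 1 : ℝ)) * δ) := by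
        refine convexHull_min ?_ (convex_closedBall _ _)
        intro y hy
        rw [Metric.mem_closedBall, dist_comm, dist_eq_norm]
        exact bc_dist N l δ hδ (by omega) hd y hy
      have := hsub (b x hx)
      rwa [Metric.mem_closedBall, dist_comm, dist_eq_norm] at this
    refine sg_mem ⟨by simp [a], ?_, ?_⟩
    · intro x hx
      rcases List.mem_cons.1 hx with rfl | hx
      · exact bc_mem l hne _ (convex_convexHull ℝ _) fun x hx => subset_convexHull ℝ _ hx
      · exact b x hx
    · intro x hx y hy
      rcases List.mem_cons.1 hx with rfl | hx <;> rcases List.mem_cons.1 hy with rfl | hy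
      · simpa using hρ
      · exact hball y hy
      · rw [norm_sub_rev]; exact hball x hx
      · exact c x hx y hy

noncomputable def Sdm (m : ℕ) : Ch R Y →ₗ[R] Ch R Y := Sd ^ m

theorem Sdm_zero (x : Ch R Y) : Sdm 0 x = x := by simp [Sdm]
theorem Sdm_succ (m : ℕ) (x : Ch R Y) : Sdm (m + 1) x = Sd (Sdm m x) := by
  simp [Sdm, pow_succ']

theorem Sdm_nil (m : ℕ) : Sdm m (sg R ([] : List Y)) = sg R [] := by
  induction m with
  | zero => rw [Sdm_zero]
  | succ m ih => rw [Sdm_succ, ih, Sd_nil]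

theorem bd_Sdm (m : ℕ) (x : Ch R Y) : bd (Sdm m x) = Sdm m (bd x) := by
  induction m with
  | zero => rw [Sdm_zero, Sdm_zero]
  | succ m ih => rw [Sdm_succ, bd_Sd, ih, Sdm_succ]

theorem mp_Sdm (m : ℕ) (T : Y →ₗ[ℝ] Z) (x : Ch R Y) : mp T (Sdm m x) = Sdm m (mp T x) := by
  induction m with
  | zero => rw [Sdm_zero, Sdm_zero]
  | succ m ih => rw [Sdm_succ, mp_Sd, ih, Sdm_succ]

theorem Sdm_supp (N : ℕ) (δ : ℝ) (hδ : 0 ≤ δ) (l : List Y) (hl : l.length ≤ N + 1)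
    (K : Set Y) (hK : Convex ℝ K) (hlK : ∀ x ∈ l, x ∈ K)
    (hd : ∀ x ∈ l, ∀ y ∈ l, ‖x - y‖ ≤ δ) (m : ℕ) :
    Sdm m (sg R l) ∈ sup R fun l' : List Y => l'.length = l.length ∧ (∀ x ∈ l', x ∈ K) ∧
      (∀ x ∈ l', ∀ y ∈ l', ‖x - y‖ ≤ (N / (N + 1 : ℝ)) ^ m * δ) := by
  induction m with
  | zero =>
    rw [Sdm_zero]
    exact sg_mem ⟨rfl, hlK, by simpa using hd⟩
  | succ m ih =>
    rw [Sdm_succ]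
    refine sup_le _ _ ?_ ih
    rintro l' ⟨a, b, c⟩
    refine sup_mono ?_ (Sd_supp N _ (by positivity) l.length l' a hl c)
    rintro l'' ⟨a', b', c'⟩
    refine ⟨a', fun x hx => convexHull_min b hK (b' x hx), ?_⟩
    rw [pow_succ', mul_assoc]
    exact c'

end Subdiv
end CTv

namespace CTv
section Topo
variable {D r : ℕ} [Fact r.Prime] {V : Type*} [Fintype V]

/-- geometric realization of the configuration complex -/
def KS (cl : V → Option (Fin D)) : Set (ZMod r × V → ℝ) :=
  {y | y ∈ stdSimplex ℝ (ZMod r × V) ∧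
    (∀ i i' v, i ≠ i' → y (i, v) * y (i', v) = 0) ∧
    (∀ i v v', v ≠ v' → cl v = cl v' → y (i, v) * y (i, v') = 0)}

theorem KS_compact (cl : V → Option (Fin D)) : IsCompact (KS (r := r) cl) := by
  have h1 : IsClosed {y : ZMod r × V → ℝ | (∀ i i' v, i ≠ i' → y (i, v) * y (i', v) = 0) ∧
    (∀ i v v', v ≠ v' → cl v = cl v' → y (i, v) * y (i, v') = 0)} := by
    simp only [Set.ofPred_and, Set.ofPred_forall]
    refine IsClosed.inter ?_ ?_
    · refine isClosed_iInter fun i => isClosed_iInter fun i' => isClosed_iInter fun v =>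
        isClosed_iInter fun _ => isClosed_eq (by fun_prop) (by fun_prop)
    · refine isClosed_iInter fun i => isClosed_iInter fun i' => isClosed_iInter fun v =>
        isClosed_iInter fun _ => isClosed_iInter fun _ => isClosed_eq (by fun_prop) (by fun_prop)
  exact (isCompact_stdSimplex ℝ _).inter_right h1

/-- shift on configuration space -/
def sY (a : ZMod r) : (ZMod r × V → ℝ) →ₗ[ℝ] (ZMod r × V → ℝ) :=
  LinearMap.funLeft ℝ ℝ fun p => (p.1 - a, p.2)

theorem sY_apply (a : ZMod r) (y : ZMod r × V → ℝ) (p) : sY a y p = y (p.1 - a, p.2) := rfl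

noncomputable def vt (p : ZMod r × V) : ZMod r × V → ℝ := Pi.single p 1

theorem sY_vt (a : ZMod r) (p : ZMod r × V) : sY a (vt p) = vt (shf a p) := by
  funext q
  obtain ⟨i, v⟩ := p
  obtain ⟨i', v'⟩ := q
  simp [sY_apply, vt, shf, Pi.single_apply, sub_eq_iff_eq_add]

/-- face of a list of vertices -/
def fc (l : List (ZMod r × V)) : Set (ZMod r × V → ℝ) :=
  {y | y ∈ stdSimplex ℝ (ZMod r × V) ∧ ∀ p, p ∉ l → y p = 0}

theorem fc_convex (l : List (ZMod r × V)) : Convex ℝ (fc l) := by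
  intro x hx y hy a b ha hb hab
  refine ⟨convex_stdSimplex ℝ _ hx.1 hy.1 ha hb hab, fun p hp => ?_⟩
  simp [hx.2 p hp, hy.2 p hp]

theorem vt_fc (l : List (ZMod r × V)) (p) (hp : p ∈ l) : vt p ∈ fc l := by
  refine ⟨single_mem_stdSimplex ℝ p, fun q hq => ?_⟩
  rw [vt, Pi.single_apply, if_neg]
  rintro rfl
  exact hq hp

theorem fc_KS (cl : V → Option (Fin D)) (l : List (ZMod r × V)) (h : Good cl l) : fc l ⊆ KS cl := by
  intro y hy
  refine ⟨hy.1, ?_, ?_⟩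
  · intro i i' v hne
    by_contra hc
    have h1 : (i, v) ∈ l := by
      by_contra h'; exact hc (by rw [hy.2 _ h', zero_mul])
    have h2 : (i', v) ∈ l := by
      by_contra h'; exact hc (by rw [hy.2 _ h', mul_zero])
    exact hne (h.1 _ h1 _ h2 rfl)
  · intro i v v' hne hcl
    by_contra hc
    have h1 : (i, v) ∈ l := by
      by_contra h'; exact hc (by rw [hy.2 _ h', zero_mul])
    have h2 : (i, v') ∈ l := by
      by_contra h'; exact hc (by rw [hy.2 _ h', mul_zero])
    exact hne (h.2.1 _ h1 _ h2 rfl hcl)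

theorem Good.len {cl : V → Option (Fin D)} {l : List (ZMod r × V)} (h : Good cl l) :
    l.length ≤ Fintype.card V := by
  have : (l.map Prod.snd).Nodup := h.2.2.map_on fun p hp q hq e => Prod.ext (h.1 p hp q hq e) e
  have := this.length_le_card
  simpa using this

/-- oscillation -/
noncomputable def osc (w : ZMod r → ℝ) : ℝ := ∑ i, ∑ i', |w i - w i'|

/-- arg max set -/
noncomputable def amax (w : ZMod r → ℝ) : Finset (ZMod r) := Finset.univ.filter fun i => ∀ i', w i' ≤ w i

theorem osc_shift (w w' : ZMod r → ℝ) (a : ZMod r) (h : ∀ i, w' (i + a) = w i) : osc w' = osc w := by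
  unfold osc
  rw [← Equiv.sum_comp (Equiv.addRight a)]
  refine Finset.sum_congr rfl fun i _ => ?_
  rw [← Equiv.sum_comp (Equiv.addRight a)]
  refine Finset.sum_congr rfl fun i' _ => ?_
  simp [h]

theorem mem_amax_shift (w w' : ZMod r → ℝ) (a : ZMod r) (h : ∀ i, w' (i + a) = w i) (i : ZMod r) :
    i ∈ amax w' ↔ i - a ∈ amax w := by
  have h' : ∀ i, w' i = w (i - a) := fun i => by rw [← h, sub_add_cancel]
  simp only [amax, Finset.mem_filter, Finset.mem_univ, true_and, h']
  constructor
  · intro hh i'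
    have := hh (i' + a)
    rwa [add_sub_cancel_right] at this
  · intro hh i'; exact hh _

theorem amax_shift (w w' : ZMod r → ℝ) (a : ZMod r) (h : ∀ i, w' (i + a) = w i) :
    amax w' = (amax w).map (Equiv.addRight a).toEmbedding := by
  ext i
  rw [mem_amax_shift w w' a h, Finset.mem_map_equiv]
  simp [sub_eq_add_neg]

theorem amax_nonempty (w : ZMod r → ℝ) : (amax w).Nonempty := by
  obtain ⟨i, hi⟩ := Finite.exists_max w
  exact ⟨i, by simpa [amax] using hi⟩

theorem osc_amax (w : ZMod r → ℝ) (h : amax w = Finset.univ) : osc w = 0 := by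
  have : ∀ i i', w i' ≤ w i := fun i i' => by
    have hi : i ∈ amax w := by rw [h]; exact Finset.mem_univ _
    simp only [amax, Finset.mem_filter, Finset.mem_univ, true_and] at hi
    exact hi i'
  unfold osc
  refine Finset.sum_eq_zero fun i _ => Finset.sum_eq_zero fun i' _ => ?_
  rw [le_antisymm (this i i') (this i' i), sub_self, abs_zero]

theorem exists_am (hD : 0 < D) : ∃ am : (Fin D → ℝ) → Fin D, ∀ (w : Fin D → ℝ) (j : Fin D), w j ≤ w (am w) := by
  have : Nonempty (Fin D) := ⟨⟨0, hD⟩⟩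
  exact ⟨fun w => (Finite.exists_max w).choose, fun w => (Finite.exists_max w).choose_spec⟩

/-- the labelling vector of a matrix -/
noncomputable def lab (am : (Fin D → ℝ) → Fin D) (W : Fin D → ZMod r → ℝ) : LV D r :=
  let j := am fun j => osc (W j)
  if amax (W j) = Finset.univ then eb (j, 0) else
    fun u => if u.1 = j ∧ u.2 ∈ amax (W j) then ((amax (W j)).card : ZMod r)⁻¹ else 0

theorem aug_lab (am : (Fin D → ℝ) → Fin D) (W : Fin D → ZMod r → ℝ) : aug (lab am W) = 1 := by
  unfold lab
  simp only
  set j := am fun j => osc (W j) with hj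
  split_ifs with h
  · exact aug_eb _
  · rw [aug_apply, Fintype.sum_prod_type, Finset.sum_eq_single j]
    · simp only [true_and]
      rw [← Finset.sum_filter, Finset.sum_const, nsmul_eq_mul]
      rw [Finset.filter_mem_eq_inter, Finset.univ_inter]
      refine mul_inv_cancel₀ ?_
      rw [Ne, ZMod.natCast_eq_zero_iff]
      intro hdvd
      have h1 := Nat.le_of_dvd (Finset.card_pos.2 (amax_nonempty _)) hdvd
      apply h
      rw [← Finset.card_eq_iff_eq_univ, ZMod.card]
      refine le_antisymm ?_ h1
      have := Finset.card_le_univ (amax (W j))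
      rwa [ZMod.card] at this
    · intro b _ hb
      simp [hb]
    · simp

theorem lab_shift (am : (Fin D → ℝ) → Fin D) (W W' : Fin D → ZMod r → ℝ) (a : ZMod r)
    (h : ∀ j i, W' j (i + a) = W j i)
    (hne : amax (W (am fun j => osc (W j))) ≠ Finset.univ) : lab am W' = sh a (lab am W) := by
  have e : (fun j => osc (W' j)) = fun j => osc (W j) := funext fun j => osc_shift _ _ a (h j)
  unfold lab
  simp only [e]
  set j := am fun j => osc (W j)
  have hc : (amax (W' j)).card = (amax (W j)).card := by
    rw [amax_shift _ _ a (h j), Finset.card_map]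
  rw [if_neg hne, if_neg]
  · funext u
    rw [sh_apply]
    simp only [hc, mem_amax_shift _ _ a (h j)]
  · rw [← Finset.card_eq_iff_eq_univ, hc, Finset.card_eq_iff_eq_univ]
    exact hne

theorem lab_ne (am : (Fin D → ℝ) → Fin D) (W : Fin D → ZMod r → ℝ)
    (hne : amax (W (am fun j => osc (W j))) ≠ Finset.univ) (j : Fin D) (k : ZMod r)
    (h : lab am W (j, k) ≠ 0) : j = (am fun j => osc (W j)) ∧ k ∈ amax (W j) := by
  unfold lab at h
  simp only [if_neg hne] at h
  by_contra hc
  apply h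
  rw [if_neg]
  rintro ⟨h1, h2⟩
  exact hc ⟨h1, by rw [h1]; exact h2⟩

theorem topo (hD : 0 < D) (cl : V → Option (Fin D)) (row : Fin D → ZMod r → V)
    (hrow : ∀ j k, k ≠ 0 → cl (row j k) = some j)
    (hinj : ∀ j k k', k ≠ 0 → k' ≠ 0 → row j k = row j k' → k = k')
    (hsurj : ∀ j v, cl v = some j → ∃ k, k ≠ 0 ∧ v = row j k)
    (pt : V) (hpt : cl pt = none)
    (U : (ZMod r × V → ℝ) → Fin D → ZMod r → ℝ) (hU : ContinuousOn U (KS cl))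
    (hUs : ∀ a, ∀ y ∈ KS cl, ∀ j i, U (sY a y) j (i + a) = U y j i) :
    ∃ y ∈ KS (r := r) cl, ∀ j i i', U y j i = U y j i' := by
  by_contra hcon
  push Not at hcon
  have hK := KS_compact (r := r) cl
  obtain ⟨am, ham⟩ := exists_am hD
  -- lower bound for the total oscillation
  obtain ⟨δ, hδ, hδK⟩ : ∃ δ > 0, ∀ y ∈ KS (r := r) cl, δ ≤ ∑ j, osc (U y j) := by
    rcases (KS (r := r) cl).eq_empty_or_nonempty with he | hne
    · exact ⟨1, one_pos, by simp [he]⟩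
    · have hcont : ContinuousOn (fun y => ∑ j, osc (U y j)) (KS (r := r) cl) := by
        have hc : Continuous fun W : Fin D → ZMod r → ℝ => ∑ j, osc (W j) := by
          unfold osc; fun_prop
        exact hc.comp_continuousOn hU
      obtain ⟨y, hy, hmin⟩ := hK.exists_isMinOn hne hcont
      refine ⟨∑ j, osc (U y j), ?_, fun z hz => hmin hz⟩
      obtain ⟨j, i, i', hne⟩ := hcon y hy
      have hnn : ∀ w : ZMod r → ℝ, 0 ≤ osc w := fun w =>
        Finset.sum_nonneg fun _ _ => Finset.sum_nonneg fun _ _ => abs_nonneg _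
      refine Finset.sum_pos' (fun j _ => hnn _) ⟨j, Finset.mem_univ _, ?_⟩
      refine Finset.sum_pos' (fun _ _ => Finset.sum_nonneg fun _ _ => abs_nonneg _)
        ⟨i, Finset.mem_univ _, ?_⟩
      exact Finset.sum_pos' (fun _ _ => abs_nonneg _)
        ⟨i', Finset.mem_univ _, abs_pos.2 (sub_ne_zero.2 hne)⟩
  have hDr : (0 : ℝ) < D := by exact_mod_cast hD
  have hr0 : (0 : ℝ) < r := by exact_mod_cast (Fact.out : r.Prime).pos
  have hbig : ∀ y ∈ KS (r := r) cl, δ ≤ D * osc (U y (am fun j => osc (U y j))) := by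
    intro y hy
    refine (hδK y hy).trans ?_
    refine (Finset.sum_le_sum fun j _ => ham (fun j => osc (U y j)) j).trans ?_
    simp
  have hnu : ∀ y ∈ KS (r := r) cl, amax (U y (am fun j => osc (U y j))) ≠ Finset.univ := by
    intro y hy h
    have := hbig y hy
    rw [osc_amax _ h, mul_zero] at this
    linarith
  set η : ℝ := δ / (4 * D * r ^ 2) with hη
  have hη0 : 0 < η := by positivity
  obtain ⟨ε, hε, huc⟩ := Metric.uniformContinuousOn_iff.1
    (hK.uniformContinuousOn_of_continuous hU) η hη0
  set N := Fintype.card V with hN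
  obtain ⟨m, hm⟩ := exists_pow_lt_of_lt_one (half_pos hε)
    (show (N / (N + 1 : ℝ)) < 1 by rw [div_lt_one (by positivity)]; linarith)
  let ℓ : (ZMod r × V → ℝ) → LV D r := fun y => lab am (U y)
  let Φ : Ch (ZMod r) (ZMod r × V) →ₗ[ZMod r] LA D r := Lab ℓ ∘ₗ Sdm m ∘ₗ mp vt
  have hΦ : ∀ x, Φ x = Lab ℓ (Sdm m (mp vt x)) := fun x => rfl
  have hsupp : ∀ l, Good cl l → Sdm m (mp vt (sg (ZMod r) l)) ∈ sup (ZMod r)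
      fun l' : List (ZMod r × V → ℝ) => l'.length = l.length ∧ (∀ x ∈ l', x ∈ KS cl) ∧
      (∀ x ∈ l', ∀ y ∈ l', dist x y < ε) := by
    intro l hl
    have hn1 : ∀ p : ZMod r × V, ‖vt p‖ ≤ 1 := by
      intro p
      rw [pi_norm_le_iff_of_nonneg zero_le_one]
      intro q
      rw [vt, Pi.single_apply]
      split_ifs <;> simp
    rw [mp_sg]
    refine sup_mono ?_ (Sdm_supp N 2 (by norm_num) (l.map vt)
      (by rw [List.length_map]; exact hl.len.trans (Nat.le_succ _)) (fc l) (fc_convex l) ?_ ?_ m)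
    · rintro l' ⟨h1, h2, h3⟩
      refine ⟨by rw [h1, List.length_map], fun x hx => fc_KS cl l hl (h2 x hx), ?_⟩
      intro x hx y hy
      rw [dist_eq_norm]
      refine (h3 x hx y hy).trans_lt ?_
      linarith
    · intro x hx
      obtain ⟨p, hp, rfl⟩ := List.mem_map.1 hx
      exact vt_fc l p hp
    · intro x hx y hy
      obtain ⟨p, hp, rfl⟩ := List.mem_map.1 hx
      obtain ⟨q, hq, rfl⟩ := List.mem_map.1 hy
      refine (norm_sub_le _ _).trans ?_
      linarith [hn1 p, hn1 q]
  refine core hD cl row hrow hinj hsurj pt hpt Φ ?_ ?_ ?_ ?_ ?_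
  · rw [hΦ, mp_sg, List.map_nil, Sdm_nil, Lab_sg, List.map_nil, pr_nil]
  · intro l _
    rw [hΦ, hΦ, Lab_bd ℓ (fun y => aug_lab am _), bd_Sdm, ← mp_bd, bd_sg]
  · intro a l hl
    rw [hΦ, hΦ]
    have e : mp vt (sg (ZMod r) (l.map (shf a))) = mp (sY a) (mp vt (sg (ZMod r) l)) := by
      rw [mp_sg, mp_sg, mp_sg, List.map_map, List.map_map]
      congr 1
      exact List.map_congr_left fun p _ => (sY_vt a p).symm
    rw [e, ← mp_Sdm]
    have : (Lab ℓ ∘ₗ mp (sY a)) (Sdm m (mp vt (sg (ZMod r) l))) =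
        ((ta a).toLinearMap ∘ₗ Lab ℓ) (Sdm m (mp vt (sg (ZMod r) l))) := by
      refine sup_eq _ _ ?_ (hsupp l hl)
      rintro l' ⟨h1, h2, h3⟩
      rw [LinearMap.comp_apply, mp_sg]
      exact Lab_map ℓ (sY a) a l' fun y hy =>
        lab_shift am (U y) (U (sY a y)) a (hUs a y (h2 y hy)) (hnu y (h2 y hy))
    exact this
  · intro l hl
    rw [hΦ]
    refine sup_le _ _ ?_ (hsupp l hl)
    rintro l' ⟨h1, h2, h3⟩
    refine Lab_CL _ _ fun j => ?_
    by_contra hc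
    push Not at hc
    choose y hy hyne using hc
    have hy2 := fun k => lab_ne am (U (y k)) (hnu _ (h2 _ (hy k))) j k (hyne k)
    have hb := hbig _ (h2 _ (hy 0))
    rw [← (hy2 0).1] at hb
    have hclose : ∀ k i, |U (y 0) j i - U (y k) j i| ≤ η := by
      intro k i
      have h4 := (huc _ (h2 _ (hy 0)) _ (h2 _ (hy k)) (h3 _ (hy 0) _ (hy k))).le
      have h5 := (dist_pi_le_iff hη0.le).1 h4 j
      have h6 := (dist_pi_le_iff hη0.le).1 h5 i
      rwa [Real.dist_eq] at h6
    have hle : ∀ i i', U (y 0) j i - U (y 0) j i' ≤ 2 * η := by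
      intro i i'
      have h4 := abs_le.1 (hclose i' i)
      have h5 := abs_le.1 (hclose i' i')
      have h6 := (hy2 i').2
      simp only [amax, Finset.mem_filter, Finset.mem_univ, true_and] at h6
      have := h6 i
      linarith [h4.1, h4.2, h5.1, h5.2]
    have hosc : osc (U (y 0) j) ≤ r * (r * (2 * η)) := by
      unfold osc
      refine (Finset.sum_le_card_nsmul _ _ (r * (2 * η)) fun i _ => ?_).trans ?_
      · refine (Finset.sum_le_card_nsmul _ _ (2 * η) fun i' _ => ?_).trans ?_
        · exact abs_le.2 ⟨by linarith [hle i' i], hle i i'⟩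
        · simp [ZMod.card]
      · simp [ZMod.card]
    have : (D : ℝ) * (r * (r * (2 * η))) = δ / 2 := by
      rw [hη]; field_simp; norm_num
    have := mul_le_mul_of_nonneg_left hosc hDr.le
    linarith
  · intro l hl
    rw [hΦ]
    refine sup_le _ _ ?_ (hsupp l hl)
    rintro l' ⟨h1, h2, h3⟩
    rw [← h1]
    exact Lab_Gr _ _

end Topo
end CTv

namespace CTv
section Final

theorem hom_cont {V : Type*} [Fintype V] {d : ℕ} (f : (V → ℝ) → (Fin d → ℝ))
    (hf : ContinuousOn f (stdSimplex ℝ V)) :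
    ContinuousOn (fun z : V → ℝ => (∑ v, z v) • f ((∑ v, z v)⁻¹ • z)) {z | ∀ v, 0 ≤ z v} := by
  obtain ⟨B, hB⟩ := ((isCompact_stdSimplex ℝ V).image_of_continuousOn hf).isBounded.exists_norm_le
  have hmem : ∀ z : V → ℝ, (∀ v, 0 ≤ z v) → (∑ v, z v) ≠ 0 →
      (∑ v, z v)⁻¹ • z ∈ stdSimplex ℝ V := by
    intro z hz h0
    have hs : 0 ≤ ∑ v, z v := Finset.sum_nonneg fun v _ => hz v
    refine ⟨fun v => mul_nonneg (inv_nonneg.2 hs) (hz v), ?_⟩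
    simp only [Pi.smul_apply, smul_eq_mul]
    rw [← Finset.mul_sum, inv_mul_cancel₀ h0]
  have hsc : Continuous fun z : V → ℝ => ∑ v, z v := by fun_prop
  intro z0 hz0
  by_cases h0 : ∑ v, z0 v = 0
  · unfold ContinuousWithinAt
    simp only [h0, zero_smul]
    have hlim : Filter.Tendsto (fun z : V → ℝ => |∑ v, z v| * B) (nhdsWithin z0 {z | ∀ v, 0 ≤ z v})
        (nhds 0) := by
      have hc : Continuous fun z : V → ℝ => |∑ v, z v| * B := by fun_prop
      have := (hc.tendsto z0).mono_left (nhdsWithin_le_nhds (s := {z | ∀ v, 0 ≤ z v}))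
      simpa [h0] using this
    refine squeeze_zero_norm' ?_ hlim
    filter_upwards [self_mem_nhdsWithin] with z hz
    rw [norm_smul, Real.norm_eq_abs]
    by_cases h1 : ∑ v, z v = 0
    · simp [h1]
    · gcongr
      exact hB _ ⟨_, hmem z hz h1, rfl⟩
  · have hopen : {z : V → ℝ | ∑ v, z v ≠ 0} ∈ nhds z0 :=
      (isOpen_ne.preimage hsc).mem_nhds h0
    rw [← continuousWithinAt_inter hopen]
    have hco : ContinuousOn (fun z : V → ℝ => (∑ v, z v) • f ((∑ v, z v)⁻¹ • z))
        ({z | ∀ v, 0 ≤ z v} ∩ {z : V → ℝ | ∑ v, z v ≠ 0}) := by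
      refine hsc.continuousOn.smul (hf.comp ?_ fun z hz => hmem z hz.1 hz.2)
      exact (hsc.continuousOn.inv₀ fun z hz => hz.2).smul continuousOn_id
    exact hco z0 ⟨hz0, h0⟩

theorem final (d r N : ℕ) [Fact r.Prime] (hN : N = (d + 1) * (r - 1))
    (f : (Fin (N + 1) → ℝ) → (Fin d → ℝ))
    (hf : ContinuousOn f (stdSimplex ℝ (Fin (N + 1))))
    (c : Fin (N + 1) → Fin (d + 2))
    (hc : ∀ j : Fin (d + 2),
      (Finset.univ.filter fun i => c i = j).card = if (j : ℕ) = d + 1 then 1 else r - 1) :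
    ∃ F : Fin r → Finset (Fin (N + 1)),
      (∀ a b : Fin r, a ≠ b → Disjoint (F a) (F b)) ∧
      (∀ a : Fin r, ∀ j : Fin (d + 2), ((F a).filter fun i => c i = j).card ≤ 1) ∧
      ∃ q, ∀ a : Fin r, ∃ x, x ∈ stdSimplex ℝ (Fin (N + 1)) ∧ (∀ i ∉ F a, x i = 0) ∧ f x = q := by
  let cl : Fin (N + 1) → Option (Fin (d + 1)) := fun v =>
    if h : (c v : ℕ) < d + 1 then some ⟨c v, h⟩ else none
  have hcl : ∀ v j, cl v = some j ↔ c v = j.castSucc := by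
    intro v j
    simp only [cl]
    split_ifs with h
    · rw [Option.some.injEq, Fin.ext_iff, Fin.ext_iff]; rfl
    · simp only [reduceCtorEq, false_iff]
      intro h'
      apply h
      rw [h']
      exact j.2
  have hcl0 : ∀ v, cl v = none ↔ c v = Fin.last (d + 1) := by
    intro v
    simp only [cl]
    split_ifs with h
    · simp only [reduceCtorEq, false_iff]
      intro h'
      rw [h'] at h
      exact absurd h (lt_irrefl _)
    · simp only [true_iff]
      refine Fin.ext ?_
      have := (c v).2
      rw [Fin.val_last]
      omega
  obtain ⟨pt, hpt⟩ : ∃ pt, c pt = Fin.last (d + 1) := by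
    have h := hc (Fin.last (d + 1))
    rw [if_pos (Fin.val_last _)] at h
    obtain ⟨a, ha⟩ := Finset.card_eq_one.1 h
    have : a ∈ Finset.univ.filter fun i => c i = Fin.last (d + 1) := by rw [ha]; simp
    exact ⟨a, (Finset.mem_filter.1 this).2⟩
  have hequiv : ∀ j : Fin (d + 1), Nonempty ({k : ZMod r // k ≠ 0} ≃ {v // c v = j.castSucc}) := by
    intro j
    rw [← Fintype.card_eq]
    have h2 : Fintype.card {a : ZMod r // a ≠ 0} = r - 1 := by
      rw [Fintype.card_subtype, Finset.filter_ne', Finset.card_erase_of_mem (Finset.mem_univ _)]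
      simp [ZMod.card]
    rw [h2, Fintype.card_subtype, hc, if_neg]
    have := j.2
    rw [Fin.val_castSucc]
    omega
  let e := fun j => (hequiv j).some
  let row : Fin (d + 1) → ZMod r → Fin (N + 1) := fun j k =>
    if h : k ≠ 0 then (e j ⟨k, h⟩ : Fin (N + 1)) else pt
  have hrowv : ∀ j k (h : k ≠ 0), row j k = (e j ⟨k, h⟩ : Fin (N + 1)) := fun j k h => dif_pos h
  let g : (Fin (N + 1) → ℝ) → (Fin d → ℝ) := fun z => (∑ v, z v) • f ((∑ v, z v)⁻¹ • z)
  let U : (ZMod r × Fin (N + 1) → ℝ) → Fin (d + 1) → ZMod r → ℝ := fun y j i =>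
    Fin.cases (∑ v, y (i, v)) (fun j => g (fun v => y (i, v)) j) j
  have hU0 : ∀ y i, U y 0 i = ∑ v, y (i, v) := fun y i => rfl
  have hUs : ∀ y (j : Fin d) i, U y j.succ i = g (fun v => y (i, v)) j := fun y j i => rfl
  obtain ⟨y, hy, hyU⟩ := topo (r := r) (D := d + 1) (Nat.succ_pos d) cl row
    (by
      intro j k hk
      rw [hcl, hrowv j k hk]
      exact (e j ⟨k, hk⟩).2)
    (by
      intro j k k' hk hk' h
      rw [hrowv j k hk, hrowv j k' hk'] at h
      have := (e j).injective (Subtype.ext h)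
      exact Subtype.ext_iff.1 this)
    (by
      intro j v hv
      rw [hcl] at hv
      refine ⟨((e j).symm ⟨v, hv⟩ : {k : ZMod r // k ≠ 0}).1, ((e j).symm ⟨v, hv⟩).2, ?_⟩
      rw [hrowv j _ ((e j).symm ⟨v, hv⟩).2]
      simp)
    pt ((hcl0 pt).2 hpt) U
    (by
      refine continuousOn_pi.2 fun j => continuousOn_pi.2 fun i => ?_
      refine Fin.cases ?_ (fun j => ?_) j
      · simp only [hU0]
        have : Continuous fun y : ZMod r × Fin (N + 1) → ℝ => ∑ v, y (i, v) := by fun_prop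
        exact this.continuousOn
      · simp only [hUs]
        have h1 : ContinuousOn (fun y : ZMod r × Fin (N + 1) → ℝ => g fun v => y (i, v)) (KS cl) := by
          refine (hom_cont f hf).comp (f := fun (y : ZMod r × Fin (N + 1) → ℝ) v => y (i, v)) ?_ ?_
          · have : Continuous fun (y : ZMod r × Fin (N + 1) → ℝ) v => y (i, v) := by fun_prop
            exact this.continuousOn
          · intro y hy v
            exact hy.1.1 _
        exact (continuousOn_pi.1 h1) j)
    (by
      intro a y _ j i
      refine Fin.cases ?_ (fun j => ?_) j
      · simp [hU0, sY_apply]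
      · simp [hUs, sY_apply])
  have hnn : ∀ p, 0 ≤ y p := hy.1.1
  set L := ∑ v, y (0, v) with hL
  have hLi : ∀ i, ∑ v, y (i, v) = L := fun i => hyU 0 i 0
  have hL0 : L ≠ 0 := by
    intro h
    have h1 := hy.1.2
    rw [Fintype.sum_prod_type] at h1
    simp [hLi, h] at h1
  have hLpos : 0 ≤ L := Finset.sum_nonneg fun v _ => hnn _
  have eq : Fin r ≃ ZMod r := Fintype.equivOfCardEq (by rw [ZMod.card, Fintype.card_fin])
  refine ⟨fun a => Finset.univ.filter fun v => y (eq a, v) ≠ 0, ?_, ?_, f (L⁻¹ • fun v => y (0, v)), ?_⟩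
  · intro a b hab
    rw [Finset.disjoint_left]
    intro v h1 h2
    rw [Finset.mem_filter] at h1 h2
    rcases mul_eq_zero.1 (hy.2.1 (eq a) (eq b) v (fun h => hab (eq.injective h))) with h | h
    · exact h1.2 h
    · exact h2.2 h
  · intro a j
    rw [Finset.card_le_one]
    intro v hv v' hv'
    simp only [Finset.mem_filter, Finset.mem_univ, true_and] at hv hv'
    by_contra hne
    have : cl v = cl v' := by simp only [cl, hv.2, hv'.2]
    rcases mul_eq_zero.1 (hy.2.2 (eq a) v v' hne this) with h | h
    · exact hv.1 h
    · exact hv'.1 h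
  · intro a
    refine ⟨L⁻¹ • fun v => y (eq a, v), ⟨fun v => mul_nonneg (inv_nonneg.2 hLpos) (hnn _), ?_⟩, ?_, ?_⟩
    · simp only [Pi.smul_apply, smul_eq_mul]
      rw [← Finset.mul_sum, hLi, inv_mul_cancel₀ hL0]
    · intro v hv
      simp only [Finset.mem_filter, Finset.mem_univ, true_and, not_not] at hv
      simp [hv]
    · funext j
      have h1 := hyU j.succ (eq a) 0
      rw [hUs, hUs] at h1
      simp only [g, hLi, Pi.smul_apply, smul_eq_mul] at h1
      exact mul_left_cancel₀ hL0 h1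

end Final
end CTv


/-- **Optimal colored Tverberg theorem** (Blagojević–Matschke–Ziegler).
For `d ≥ 1`, `r ≥ 2` prime, `N = (d+1)(r-1)`, and `f` continuous on the standard
`N`-simplex whose `N + 1` vertices are colored with `d + 2` colors, with color classes
`|C_0| = … = |C_d| = r - 1` and `|C_{d+1}| = 1`, there are `r` pairwise disjoint rainbow
faces whose images under `f` intersect. -/
theorem colored_tverberg_continuous (d r N : ℕ) (hd : 1 ≤ d) (hr : 2 ≤ r)
    (hrp : Nat.Prime r) (hN : N = (d + 1) * (r - 1))
    (f : (Fin (N + 1) → ℝ) → (Fin d → ℝ))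
    (hf : ContinuousOn f (stdSimplex ℝ (Fin (N + 1))))
    (c : Fin (N + 1) → Fin (d + 2))
    (hc : ∀ j : Fin (d + 2),
      (Finset.univ.filter fun i => c i = j).card = if (j : ℕ) = d + 1 then 1 else r - 1) :
    ∃ F : Fin r → Finset (Fin (N + 1)),
      (∀ a b : Fin r, a ≠ b → Disjoint (F a) (F b)) ∧
      (∀ a : Fin r, ∀ j : Fin (d + 2), ((F a).filter fun i => c i = j).card ≤ 1) ∧
      (⋂ a : Fin r, f '' simplexFace N (F a)).Nonempty := by
  have : Fact r.Prime := ⟨hrp⟩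
  obtain ⟨F, h1, h2, q, hq⟩ := CTv.final d r N hN f hf c hc
  refine ⟨F, h1, h2, q, ?_⟩
  rw [Set.mem_iInter]
  intro a
  obtain ⟨x, hx, hx0, hfx⟩ := hq a
  exact ⟨x, ⟨hx, hx0⟩, hfx⟩
end

section
/- Let d ≥ 1, let r ≥ 2 be a prime, and let N = (d+1)(r−1). Let P be a set of N+1 points in ℝ^d colored with d+2 colors so that the color classes satisfy |C_0| = |C_1| = … = |C_d| = r−1 and |C_{d+1}| = 1. Then P can be partitioned into r rainbow blocks B_1, B_2, …, B_r such that ⋂_{i=1}^r conv(B_i) ≠ ∅. -/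
set_option linter.unusedSectionVars false
namespace CT
open Finset

section comb
variable {ι : Type} [Fintype ι] [DecidableEq ι]

def T (l m : ι → ℝ) (i : ι) : Prop :=
  l i * m i < 0 ∧ ∀ j, j ≠ i → 0 < m i * (m i * l j - m j * l i)

lemma T_swap (l m : ι → ℝ) (i : ι) (h : T l m i) : T m l i := by
  refine ⟨by linarith [h.1, mul_comm (l i) (m i)], fun j hj => ?_⟩
  have h1 := h.2 j hj
  have h0 := h.1
  have hm : m i ≠ 0 := by rintro hm; rw [hm] at h0; simp at h0
  have hm2 : 0 < m i * m i := mul_self_pos.2 hm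
  by_contra hc
  push Not at hc
  have : 0 < (m i * (m i * l j - m j * l i)) * (-(l i * m i)) := mul_pos h1 (by linarith)
  have h3 : (m i * (m i * l j - m j * l i)) * (-(l i * m i)) = (m i * m i) * (l i * (l i * m j - l j * m i)) := by ring
  rw [h3] at this
  have := (pos_iff_pos_of_mul_pos this).1 hm2
  linarith

open Classical in
lemma half (l m : ι → ℝ) (hm : ∀ i, m i ≠ 0)
    (hlm : ∀ i j, i ≠ j → m i * l j - m j * l i ≠ 0)
    (hg : ∃ s : ℝ, 0 < s ∧ ∀ j, 0 < l j + s * m j) :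
    (∑ i, if m i < 0 ∧ T l m i then (1:ℤ) else 0) = 1 - if ∀ i, 0 < m i then 1 else 0 := by
  obtain ⟨s, hs, hg⟩ := hg
  by_cases hall : ∀ i, 0 < m i
  · rw [if_pos hall]
    simp only [sub_self]
    apply sum_eq_zero
    intro i _
    rw [if_neg]
    exact fun h => absurd h.1 (not_lt.2 (hall i).le)
  · rw [if_neg hall]
    push Not at hall
    obtain ⟨i0, hi0⟩ := hall
    have hi0 : m i0 < 0 := lt_of_le_of_ne hi0 (hm i0)
    obtain ⟨i, hi, hmin⟩ := exists_min_image (univ.filter fun i => m i < 0) (fun i => -l i / m i)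
      ⟨i0, by simp [hi0]⟩
    simp only [mem_filter, mem_univ, true_and] at hi hmin
    have hTi : T l m i := by
      have hli : 0 < l i := by have := hg i; nlinarith
      refine ⟨by nlinarith, fun j hj => ?_⟩
      apply mul_pos_of_neg_of_neg hi
      rcases lt_or_gt_of_ne (hm j) with hj' | hj'
      · have := hmin j hj'
        have hne := hlm i j hj.symm
        refine lt_of_le_of_ne ?_ hne
        have e1 : -l i / m i = l i / (-m i) := by rw [div_neg, neg_div]
        have e2 : -l j / m j = l j / (-m j) := by rw [div_neg, neg_div]
        rw [e1, e2, div_le_div_iff₀ (by linarith) (by linarith)] at this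
        nlinarith
      · have h1 := hg i
        have h2 := hg j
        -- m i * l j < m j * l i
        nlinarith [mul_pos (neg_pos.2 hi) h2, mul_pos hj' h1]
    rw [sum_eq_single i]
    · simp [hi, hTi]
    · intro j _ hj
      rw [if_neg]
      rintro ⟨h1, h2⟩
      have a1 := hTi.2 j hj
      have a2 := h2.2 i hj.symm
      have b1 := neg_of_mul_pos_right a1 hi.le
      have b2 := neg_of_mul_pos_right a2 h1.le
      linarith
    · simp

open Classical in
lemma comb (l m : ι → ℝ) (hl : ∀ i, l i ≠ 0) (hm : ∀ i, m i ≠ 0)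
    (hlm : ∀ i j, i ≠ j → m i * l j - m j * l i ≠ 0) :
    (if ∀ i, 0 < l i then (1:ℤ) else 0) = (if ∀ i, 0 < m i then (1:ℤ) else 0)
      + ∑ i, if T l m i then (-(SignType.sign (m i) : ℤ)) else 0 := by
  have hsplit : ∀ i, (if T l m i then (-(SignType.sign (m i) : ℤ)) else 0) =
      (if m i < 0 ∧ T l m i then (1:ℤ) else 0) - (if l i < 0 ∧ T m l i then (1:ℤ) else 0) := by
    intro i
    have hT : T m l i ↔ T l m i := ⟨T_swap _ _ _, T_swap _ _ _⟩
    rw [hT]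
    by_cases h : T l m i
    · have h0 := h.1
      rcases lt_or_gt_of_ne (hm i) with hj' | hj'
      · have : ¬ l i < 0 := by intro h; nlinarith
        simp [h, hj', this]
      · have h1 : l i < 0 := by by_contra h; push Not at h; nlinarith
        simp [h, hj', h1, not_lt.2 hj'.le]
    · simp [h]
  simp only [hsplit, sum_sub_distrib]
  by_cases hg : ∃ s : ℝ, 0 < s ∧ ∀ j, 0 < l j + s * m j
  · rw [half l m hm hlm hg, half m l hl]
    · ring
    · intro i j hij
      have := hlm i j hij
      intro h
      apply this
      linarith [h, mul_comm (l i) (m j), mul_comm (l j) (m i)]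
    · obtain ⟨s, hs, hg⟩ := hg
      refine ⟨s⁻¹, by positivity, fun j => ?_⟩
      have := mul_pos (inv_pos.2 hs) (hg j)
      have e : s⁻¹ * (l j + s * m j) = m j + s⁻¹ * l j := by field_simp; ring
      linarith
  · have hev : ∀ i, ¬ T l m i := by
      intro i hT
      apply hg
      have h0 := hT.1
      have hmi := hm i
      set s0 : ℝ := - l i / m i with hs0
      have hs0p : 0 < s0 := by
        have : s0 = (-(l i * m i)) / (m i * m i) := by rw [hs0]; field_simp
        rw [this]; exact div_pos (by linarith) (mul_self_pos.2 hmi)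
      have hz : l i + s0 * m i = 0 := by rw [hs0]; field_simp; ring
      have hoth : ∀ j, j ≠ i → 0 < l j + s0 * m j := by
        intro j hj
        have h1 := hT.2 j hj
        have : l j + s0 * m j = (m i * (m i * l j - m j * l i)) / (m i * m i) := by
          rw [hs0]; field_simp; ring
        rw [this]; exact div_pos h1 (mul_self_pos.2 hmi)
      have e1 : ∀ᶠ e : ℝ in nhdsWithin 0 (Set.Ioi 0), ∀ j, 0 < l j + (s0 + e * m i) * m j := by
        rw [Filter.eventually_all]
        intro j
        by_cases hj : j = i
        · subst hj
          filter_upwards [self_mem_nhdsWithin] with e he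
          have : 0 < e * (m j * m j) := mul_pos he (mul_self_pos.2 hmi)
          linarith
        · have hc : Continuous fun e : ℝ => l j + (s0 + e * m i) * m j := by fun_prop
          have := (hc.tendsto 0).eventually (lt_mem_nhds (a := 0) (by simpa using hoth j hj))
          exact this.filter_mono nhdsWithin_le_nhds
      have e2 : ∀ᶠ e : ℝ in nhdsWithin 0 (Set.Ioi 0), 0 < s0 + e * m i := by
        have hc : Continuous fun e : ℝ => s0 + e * m i := by fun_prop
        have := (hc.tendsto 0).eventually (lt_mem_nhds (a := 0) (by simpa using hs0p))
        exact this.filter_mono nhdsWithin_le_nhds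
      obtain ⟨e, h1, h2⟩ := (e1.and e2).exists
      exact ⟨_, h2, h1⟩
    have hstart : ∀ l m : ι → ℝ, (∀ i, 0 < l i) → ∃ s : ℝ, 0 < s ∧ ∀ j, 0 < l j + s * m j := by
      intro l m hl
      have e1 : ∀ᶠ e : ℝ in nhdsWithin 0 (Set.Ioi 0), ∀ j, 0 < l j + e * m j := by
        rw [Filter.eventually_all]
        intro j
        have hc : Continuous fun e : ℝ => l j + e * m j := by fun_prop
        have := (hc.tendsto 0).eventually (lt_mem_nhds (a := 0) (by simpa using hl j))
        exact this.filter_mono nhdsWithin_le_nhds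
      obtain ⟨e, h1, h2⟩ := (e1.and self_mem_nhdsWithin).exists
      exact ⟨_, h2, h1⟩
    have h1 : ¬ ∀ i, 0 < l i := fun h => hg (hstart l m h)
    have h2 : ¬ ∀ i, 0 < m i := by
      intro h
      obtain ⟨s, hs, h'⟩ := hstart m l h
      apply hg
      refine ⟨s⁻¹, by positivity, fun j => ?_⟩
      have := mul_pos (inv_pos.2 hs) (h' j)
      have e : s⁻¹ * (m j + s * l j) = l j + s⁻¹ * m j := by field_simp; ring
      linarith
    have hev' : ∀ i, ¬ T m l i := fun i h => hev i (T_swap _ _ _ h)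
    simp [h1, h2, hev, hev']
end comb

section ff
variable {ι : Type} [Fintype ι] [DecidableEq ι]

open Classical in
/-- signed indicator of `x` in the open cone spanned by the rows of `a`. -/
noncomputable def f (x : ι → ℝ) (a : Matrix ι ι ℝ) : ℤ :=
  if ∀ i, 0 < (a.updateRow i x).det * a.det then (SignType.sign a.det : ℤ) else 0

lemma exists_coord (a : Matrix ι ι ℝ) (ha : a.det ≠ 0) (x : ι → ℝ) :
    ∃ l : ι → ℝ, x = ∑ k, l k • a k := by
  refine ⟨Matrix.vecMul x a⁻¹, ?_⟩
  have h1 : Matrix.vecMul (Matrix.vecMul x a⁻¹) a = x := by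
    rw [Matrix.vecMul_vecMul, Matrix.nonsing_inv_mul _ (isUnit_iff_ne_zero.2 ha), Matrix.vecMul_one]
  rw [← Matrix.vecMul_eq_sum, h1]

lemma det_two (a : Matrix ι ι ℝ) (l m : ι → ℝ) (i j : ι) (hij : j ≠ i) :
    ((a.updateRow i (∑ k, m k • a k)).updateRow j (∑ k, l k • a k)).det
      = (m i * l j - m j * l i) * a.det := by
  set y := ∑ k, m k • a k with hy
  set M := a.updateRow i y with hM
  have hMd : M.det = m i * a.det := by rw [hM, hy, Matrix.det_updateRow_sum, smul_eq_mul]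
  have h1 : (∑ k, l k • a k) = l i • a i + ∑ k, (Function.update l i 0) k • M k := by
    rw [← Finset.add_sum_erase _ _ (mem_univ i), ← Finset.add_sum_erase univ (fun k => (Function.update l i 0) k • M k) (mem_univ i)]
    simp only [Function.update_self, zero_smul, zero_add]
    congr 1
    apply sum_congr rfl
    intro k hk
    have hk := ne_of_mem_erase hk
    rw [Function.update_of_ne hk, hM, Matrix.updateRow_ne hk]
  rw [h1, Matrix.det_updateRow_add, Matrix.det_updateRow_sum, Matrix.det_updateRow_smul, hMd,
    Function.update_of_ne hij]
  have h2 : (M.updateRow j (a i)) = (a.updateRow j y).submatrix (Equiv.swap i j) id := by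
    ext p q
    simp only [Matrix.submatrix_apply, id, hM]
    by_cases hpj : p = j
    · subst hpj
      simp [Matrix.updateRow_ne hij.symm]
    · by_cases hpi : p = i
      · subst hpi
        simp [Matrix.updateRow_ne hij.symm]
      · rw [Equiv.swap_apply_of_ne_of_ne hpi hpj, Matrix.updateRow_ne hpj, Matrix.updateRow_ne hpi, Matrix.updateRow_ne hpj]
  rw [h2, Matrix.det_permute, Equiv.Perm.sign_swap hij.symm, hy, Matrix.det_updateRow_sum]
  simp only [smul_eq_mul]
  push_cast
  ring

lemma cocycle (x x' : ι → ℝ) (a : Matrix ι ι ℝ) (ha : a.det ≠ 0)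
    (hx : ∀ i, (a.updateRow i x).det ≠ 0) (hx' : ∀ i, (a.updateRow i x').det ≠ 0)
    (hxx : ∀ i j, j ≠ i → ((a.updateRow i x').updateRow j x).det ≠ 0) :
    f x a = f x' a + ∑ i, f x (a.updateRow i (-x')) := by
  obtain ⟨l, rfl⟩ := exists_coord a ha x
  obtain ⟨m, rfl⟩ := exists_coord a ha x'
  simp only [Matrix.det_updateRow_sum, smul_eq_mul, mul_ne_zero_iff] at hx hx'
  have hpos : 0 < a.det * a.det := mul_self_pos.2 ha
  have key := comb l m (fun i => (hx i).1) (fun i => (hx' i).1) (by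
    intro i j hij h
    apply hxx i j hij.symm
    rw [det_two _ _ _ _ _ hij.symm, h, zero_mul])
  have e0 : ∀ l : ι → ℝ, f (∑ k, l k • a k) a = (SignType.sign a.det : ℤ) * (by classical exact if ∀ i, 0 < l i then (1:ℤ) else 0) := by
    intro l
    unfold f
    simp only [Matrix.det_updateRow_sum, smul_eq_mul, mul_assoc, mul_pos_iff_of_pos_right hpos]
    split_ifs <;> simp
  have e1 : ∀ i, f (∑ k, l k • a k) (a.updateRow i (-∑ k, m k • a k)) =
      (SignType.sign a.det : ℤ) * (by classical exact if T l m i then (-(SignType.sign (m i) : ℤ)) else 0) := by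
    intro i
    have hneg : (-∑ k, m k • a k) = ∑ k, (-m k) • a k := by simp
    rw [hneg]
    unfold f
    have hT : (∀ j, 0 < ((a.updateRow i (∑ k, (-m k) • a k)).updateRow j (∑ k, l k • a k)).det *
        (a.updateRow i (∑ k, (-m k) • a k)).det) ↔ T l m i := by
      rw [T]
      constructor
      · intro h
        constructor
        · have := h i
          rw [Matrix.updateRow_idem, Matrix.det_updateRow_sum a i l, Matrix.det_updateRow_sum a i (fun k => - m k)] at this
          simp only [smul_eq_mul] at this
          have e : l i * a.det * (- m i * a.det) = (-(l i * m i)) * (a.det * a.det) := by ring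
          rw [e, mul_pos_iff_of_pos_right hpos] at this
          linarith
        · intro j hj
          have := h j
          rw [det_two a l (fun k => - m k) i j hj, Matrix.det_updateRow_sum a i (fun k => - m k)] at this
          simp only [smul_eq_mul] at this
          have e : (-m i * l j - -m j * l i) * a.det * (-m i * a.det) = (m i * (m i * l j - m j * l i)) * (a.det * a.det) := by ring
          rwa [e, mul_pos_iff_of_pos_right hpos] at this
      · rintro ⟨h1, h2⟩ j
        by_cases hj : j = i
        · subst hj
          rw [Matrix.updateRow_idem, Matrix.det_updateRow_sum a j l, Matrix.det_updateRow_sum a j (fun k => - m k)]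
          simp only [smul_eq_mul]
          have e : l j * a.det * (- m j * a.det) = (-(l j * m j)) * (a.det * a.det) := by ring
          rw [e, mul_pos_iff_of_pos_right hpos]
          linarith
        · rw [det_two a l (fun k => - m k) i j hj, Matrix.det_updateRow_sum a i (fun k => - m k)]
          simp only [smul_eq_mul]
          have e : (-m i * l j - -m j * l i) * a.det * (-m i * a.det) = (m i * (m i * l j - m j * l i)) * (a.det * a.det) := by ring
          rw [e, mul_pos_iff_of_pos_right hpos]
          exact h2 j hj
    by_cases h : T l m i
    · rw [if_pos (hT.2 h), if_pos h, Matrix.det_updateRow_sum a i (fun k => - m k), smul_eq_mul, sign_mul, Left.sign_neg]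
      push_cast
      ring
    · rw [if_neg (fun h' => h (hT.1 h')), if_neg h]; simp
  rw [e0 l, e0 m]
  simp only [e1]
  rw [key, mul_add, mul_sum]
end ff
end CT

namespace CT
open Finset

lemma cocycle' {ι : Type} [Fintype ι] [DecidableEq ι] (x y : ι → ℝ) (a : Matrix ι ι ℝ) (ha : a.det ≠ 0)
    (hx : ∀ i, (a.updateRow i x).det ≠ 0) (hy : ∀ i, (a.updateRow i y).det ≠ 0)
    (hxy : ∀ i j, j ≠ i → ((a.updateRow i y).updateRow j x).det ≠ 0) :
    f x a = f (-y) a + ∑ i, f x (a.updateRow i y) := by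
  have hneg : ∀ (a : Matrix ι ι ℝ) i (y : ι → ℝ), (a.updateRow i (-y)).det = - (a.updateRow i y).det := by
    intro a i y
    have := Matrix.det_updateRow_smul a i (-1) y
    simpa using this
  have := cocycle x (-y) a ha hx (fun i => by rw [hneg]; exact neg_ne_zero.2 (hy i)) ?_
  · simpa using this
  · intro i j hij
    rw [Matrix.updateRow_comm _ hij.symm, hneg, Matrix.updateRow_comm _ hij]
    exact neg_ne_zero.2 (hxy i j hij)

abbrev I (n m : ℕ) := Fin n × Fin m

section act
variable {n m : ℕ}

/-- extension by zero -/
def ex (x : I n m → ℝ) (c : Fin n) (j : Fin (m+1)) : ℝ := Fin.cases 0 (fun q => x (c, q)) j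

/-- the cyclic action -/
def G (k : Fin (m+1)) : (I n m → ℝ) →ₗ[ℝ] (I n m → ℝ) where
  toFun x := fun p => ex x p.1 (p.2.succ - k) - ex x p.1 (0 - k)
  map_add' x y := by
    have : ∀ c j, ex (x+y) c j = ex x c j + ex y c j := by
      intro c j; refine Fin.cases ?_ (fun q => ?_) j <;> simp [ex]
    ext p; simp only [this, Pi.add_apply]; ring
  map_smul' t x := by
    have : ∀ c j, ex (t • x) c j = t * ex x c j := by
      intro c j; refine Fin.cases ?_ (fun q => ?_) j <;> simp [ex]
    ext p; simp only [this, Pi.smul_apply, smul_eq_mul, RingHom.id_apply]; ring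

lemma G_apply (k : Fin (m+1)) (x : I n m → ℝ) (p : I n m) :
    G k x p = ex x p.1 (p.2.succ - k) - ex x p.1 (0 - k) := rfl

lemma ex_G (k : Fin (m+1)) (x : I n m → ℝ) (c : Fin n) (j : Fin (m+1)) :
    ex (G k x) c j = ex x c (j - k) - ex x c (0 - k) := by
  refine Fin.cases ?_ (fun q => ?_) j
  · simp [ex]
  · rfl

lemma G_G (k l : Fin (m+1)) (x : I n m → ℝ) : G k (G l x) = G (k + l) x := by
  ext p
  rw [G_apply, ex_G, ex_G, G_apply]
  rw [sub_sub _ k l, sub_sub 0 k l]; ring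

lemma G_zero (x : I n m → ℝ) : G 0 x = x := by
  ext p
  rw [G_apply]; simp [ex]

lemma G_mul (k l : Fin (m+1)) : (G k : (I n m → ℝ) →ₗ[ℝ] _) * G l = G (k + l) :=
  LinearMap.ext fun x => G_G k l x

lemma G_pow (k : Fin (m+1)) (t : ℕ) : (G k : (I n m → ℝ) →ₗ[ℝ] _) ^ t = G (t • k) := by
  induction t with
  | zero => rw [pow_zero, zero_smul]; exact (LinearMap.ext fun x => G_zero x).symm
  | succ t ih => rw [pow_succ, ih, G_mul, succ_nsmul]

lemma nsmul_self (k : Fin (m+1)) : (m+1) • k = 0 := by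
  have := card_nsmul_eq_zero' (x := k)
  simpa using this

lemma detG_pow (k : Fin (m+1)) : (LinearMap.det (G k : (I n m → ℝ) →ₗ[ℝ] _)) ^ (m+1) = 1 := by
  rw [← map_pow, G_pow, nsmul_self]
  have : (G 0 : (I n m → ℝ) →ₗ[ℝ] _) = 1 := LinearMap.ext fun x => G_zero x
  rw [this, map_one]

/-- pure tensors -/
def ten (y : Fin n → ℝ) (j : Fin (m+1)) : I n m → ℝ :=
  fun p => y p.1 * ((if j = p.2.succ then 1 else 0) - (if j = 0 then 1 else 0))

lemma ex_ten (y : Fin n → ℝ) (j : Fin (m+1)) (c : Fin n) (i : Fin (m+1)) :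
    ex (ten y j) c i = y c * ((if j = i then 1 else 0) - (if j = 0 then 1 else 0)) := by
  refine Fin.cases ?_ (fun q => ?_) i
  · simp [ex]
  · rfl

lemma G_ten (k : Fin (m+1)) (y : Fin n → ℝ) (j : Fin (m+1)) : G k (ten y j) = ten y (k + j) := by
  ext p
  rw [G_apply, ex_ten, ex_ten, ten]
  simp only [eq_sub_iff_add_eq, add_comm k j]
  ring

lemma f_mul {ι : Type} [Fintype ι] [DecidableEq ι] (x : ι → ℝ) (a M : Matrix ι ι ℝ) (hM : M.det ≠ 0) :
    f (Matrix.vecMul x M) (a * M) = (SignType.sign M.det : ℤ) * f x a := by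
  unfold f
  have h : ∀ i, (a * M).updateRow i (Matrix.vecMul x M) = (a.updateRow i x) * M := by
    intro i
    ext p q
    by_cases hp : p = i
    · subst hp; simp [Matrix.mul_apply, Matrix.vecMul, dotProduct]
    · simp [Matrix.updateRow_ne hp, Matrix.mul_apply]
  have h2 : ∀ i, 0 < ((a * M).updateRow i (Matrix.vecMul x M)).det * (a * M).det ↔ 0 < (a.updateRow i x).det * a.det := by
    intro i
    rw [h, Matrix.det_mul, Matrix.det_mul]
    have e : (a.updateRow i x).det * M.det * (a.det * M.det) = ((a.updateRow i x).det * a.det) * (M.det * M.det) := by ring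
    rw [e, mul_pos_iff_of_pos_right (mul_self_pos.2 hM)]
  simp only [h2]
  rw [Matrix.det_mul, sign_mul]
  split_ifs
  · push_cast; ring
  · simp

lemma f_G (k : Fin (m+1)) (x : I n m → ℝ) (a : Matrix (I n m) (I n m) ℝ) :
    f (G k x) (Matrix.of fun i => G k (a i)) =
      (SignType.sign (LinearMap.det (G k : (I n m → ℝ) →ₗ[ℝ] _)) : ℤ) * f x a := by
  have hd : LinearMap.det (G k : (I n m → ℝ) →ₗ[ℝ] _) ≠ 0 := by
    intro h
    have := detG_pow (n := n) k
    rw [h] at this; simp at this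
  have hv : ∀ x, G k x = Matrix.vecMul x (LinearMap.toMatrix' (G k : (I n m → ℝ) →ₗ[ℝ] _)).transpose := by
    intro x
    rw [Matrix.vecMul_transpose, LinearMap.toMatrix'_mulVec]
  have hdet : (LinearMap.toMatrix' (G k : (I n m → ℝ) →ₗ[ℝ] _)).transpose.det = LinearMap.det (G k : (I n m → ℝ) →ₗ[ℝ] _) := by
    rw [Matrix.det_transpose, LinearMap.det_toMatrix']
  rw [← hdet, ← f_mul _ _ _ (by rw [hdet]; exact hd), ← hv]
  congr 1
  ext p q
  simp only [Matrix.of_apply]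
  rw [hv, Matrix.mul_apply]; rfl

end act

section DD
variable {n m : ℕ}

abbrev PP (n m : ℕ) := Fin n → Equiv.Perm (Fin (m+1))

def A (u : I n m → I n m → ℝ) (π : PP n m) : Matrix (I n m) (I n m) ℝ :=
  Matrix.of fun i => G (π i.1 i.2.succ) (u i)

def sg (π : PP n m) : ℤ := ∏ c, (Equiv.Perm.sign (π c) : ℤ)

lemma sg_mul (π τ : PP n m) : sg (π * τ) = sg π * sg τ := by
  simp [sg, prod_mul_distrib]

noncomputable def D (x : I n m → ℝ) (u : I n m → I n m → ℝ) : ℤ := ∑ π : PP n m, sg π * f x (A u π)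

def tau (i : I n m) : PP n m := Pi.mulSingle i.1 (Equiv.swap i.2.succ 0)

lemma sg_tau (i : I n m) : sg (tau i) = -1 := by
  unfold sg tau
  rw [prod_eq_single i.1]
  · simp [Equiv.Perm.sign_swap (Fin.succ_ne_zero i.2)]
  · intro c _ hc
    simp [Pi.mulSingle_eq_of_ne hc]
  · simp

lemma tau_ne (π : PP n m) (i j : I n m) (h : j ≠ i) : (π * tau i) j.1 j.2.succ = π j.1 j.2.succ := by
  unfold tau
  by_cases hc : j.1 = i.1
  · have h2 : j.2 ≠ i.2 := fun h2 => h (Prod.ext hc h2)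
    rw [Pi.mul_apply, hc, Pi.mulSingle_eq_same, Equiv.Perm.mul_apply, Equiv.swap_apply_of_ne_of_ne]
    · exact fun h' => h2 (Fin.succ_injective _ h')
    · exact Fin.succ_ne_zero _
  · rw [Pi.mul_apply, Pi.mulSingle_eq_of_ne hc, mul_one]

lemma cancel (i : I n m) (F : PP n m → ℤ) (hF : ∀ π, F (π * tau i) = F π) :
    ∑ π, sg π * F π = 0 := by
  have h : ∑ π, sg π * F π = ∑ π, sg (π * tau i) * F (π * tau i) :=
    (Equiv.sum_comp (Equiv.mulRight (tau i)) (fun π => sg π * F π)).symm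
  simp only [hF, sg_mul, sg_tau, mul_neg, mul_one, neg_mul, sum_neg_distrib] at h
  linarith

lemma A_tau (u : I n m → I n m → ℝ) (π : PP n m) (i : I n m) (y : I n m → ℝ) :
    (A u (π * tau i)).updateRow i y = (A u π).updateRow i y := by
  ext p q
  by_cases hp : p = i
  · subst hp; simp
  · simp only [Matrix.updateRow_ne hp]
    simp only [A, Matrix.of_apply, tau_ne π i p hp]

/-- Condition for the cocycle identity. -/
def Ok (x y : I n m → ℝ) (a : Matrix (I n m) (I n m) ℝ) : Prop :=
  a.det ≠ 0 ∧ (∀ i, (a.updateRow i x).det ≠ 0) ∧ (∀ i, (a.updateRow i y).det ≠ 0) ∧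
    (∀ i j, j ≠ i → ((a.updateRow i y).updateRow j x).det ≠ 0)

lemma stepA (x x' : I n m → ℝ) (u : I n m → I n m → ℝ) (h : ∀ π, Ok x x' (A u π)) :
    D x u = D x' u := by
  unfold D
  have : ∀ π, sg π * f x (A u π) = sg π * f x' (A u π) + ∑ i, sg π * f x ((A u π).updateRow i (-x')) := by
    intro π
    rw [cocycle x x' _ (h π).1 (h π).2.1 (h π).2.2.1 (h π).2.2.2, mul_add, mul_sum]
  simp only [this, sum_add_distrib]
  rw [sum_comm]
  rw [add_eq_left]
  apply sum_eq_zero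
  intro i _
  exact cancel i _ (fun π => by rw [A_tau])

def rot (j : Fin (m+1)) : PP n m := fun _ => Equiv.addLeft j

noncomputable def eps (n : ℕ) (j : Fin (m+1)) : ℤ := sg (rot j : PP n m) * (SignType.sign (LinearMap.det (G j : (I n m → ℝ) →ₗ[ℝ] _)) : ℤ)

lemma eps_pow (j : Fin (m+1)) : (eps n j) ^ (m+1) = 1 := by
  unfold eps sg rot
  rw [mul_pow, ← prod_pow]
  have h1 : ((Equiv.Perm.sign (Equiv.addLeft j) : ℤ)) ^ (m+1) = 1 := by
    have : (Equiv.addLeft j) ^ (m+1) = 1 := by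
      have h : ∀ t : ℕ, (Equiv.addLeft j) ^ t = Equiv.addLeft (t • j) := by
        intro t
        induction t with
        | zero => ext; simp
        | succ t ih => rw [pow_succ, ih, succ_nsmul]; ext i; simp [add_assoc]
      rw [h, nsmul_self]; ext; simp
    rw [← Units.val_pow_eq_pow_val, ← map_pow, this]; simp
  simp only [h1, prod_const_one, one_mul]
  have := detG_pow (n := n) j
  have h2 := congrArg (fun t => ((SignType.sign t : SignType) : ℤ)) this
  simp only [sign_pow, SignType.coe_pow, sign_one, SignType.coe_one] at h2
  exact h2

lemma A_rot (u : I n m → I n m → ℝ) (π : PP n m) (j : Fin (m+1)) :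
    A u (rot j * π) = Matrix.of fun i => G j (A u π i) := by
  ext p q
  change G (((rot j * π : PP n m)) p.1 p.2.succ) (u p) q = G j (G (π p.1 p.2.succ) (u p)) q
  rw [G_G]
  rfl

lemma stepB (hp : (m+1).Prime) (x : I n m → ℝ) (u : I n m → I n m → ℝ) (k : I n m) (u' : I n m → ℝ)
    (h : ∀ π : PP n m, Ok x (G (π k.1 k.2.succ) u') (A u π)) :
    ((D x u : ℤ) : ZMod (m+1)) = (D x (Function.update u k u') : ℤ) := by
  have : Fact (m+1).Prime := ⟨hp⟩
  have h1 : D x u = ∑ π : PP n m, sg π * f (-(G (π k.1 k.2.succ) u')) (A u π) + D x (Function.update u k u') := by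
    unfold D
    have : ∀ π : PP n m, sg π * f x (A u π) = sg π * f (-(G (π k.1 k.2.succ) u')) (A u π)
        + ∑ i, sg π * f x ((A u π).updateRow i (G (π k.1 k.2.succ) u')) := by
      intro π
      rw [cocycle' x (G (π k.1 k.2.succ) u') _ (h π).1 (h π).2.1 (h π).2.2.1 (h π).2.2.2, mul_add, mul_sum]
    simp only [this, sum_add_distrib]
    rw [sum_comm]
    congr 1
    rw [sum_eq_single k]
    · apply sum_congr rfl
      intro π _
      congr 2
      ext p q
      by_cases hpk : p = k
      · subst hpk; simp [A]
      · simp [A, Matrix.updateRow_ne hpk, Function.update_of_ne hpk]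
    · intro i _ hi
      exact cancel i (fun π => f x ((A u π).updateRow i (G (π k.1 k.2.succ) u'))) (fun π => by rw [A_tau, tau_ne π i k hi.symm])
    · simp
  rw [h1, Int.cast_add, add_eq_right]
  set R : PP n m → ℤ := fun π => sg π * f (-(G (π k.1 k.2.succ) u')) (A u π) with hR
  have hRrot : ∀ j π, ((R (rot j * π) : ℤ) : ZMod (m+1)) = (R π : ℤ) := by
    intro j π
    have e : R (rot j * π) = eps n j * R π := by
      simp only [hR]
      rw [sg_mul, A_rot]
      have : -(G (((rot j * π : PP n m)) k.1 k.2.succ) u') = G j (-(G (π k.1 k.2.succ) u')) := by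
        rw [map_neg, G_G]; rfl
      rw [this, f_G]
      unfold eps
      ring
    have e2 : ((eps n j : ℤ) : ZMod (m+1)) = 1 := by
      have := congrArg (Int.cast : ℤ → ZMod (m+1)) (eps_pow (n := n) j)
      rw [Int.cast_pow, ZMod.pow_card] at this
      simpa using this
    rw [e, Int.cast_mul, e2, one_mul]
  have : ∑ π, R π = ∑ j : Fin (m+1), ∑ π, if π k.1 k.2.succ = j then R π else 0 := by
    rw [sum_comm]; simp
  change ((∑ π, R π : ℤ) : ZMod (m+1)) = 0
  rw [this]
  push_cast
  have h3 : ∀ j : Fin (m+1), (∑ π : PP n m, if π k.1 k.2.succ = j then ((R π : ℤ) : ZMod (m+1)) else 0) =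
      ∑ π : PP n m, if π k.1 k.2.succ = 0 then ((R π : ℤ) : ZMod (m+1)) else 0 := by
    intro j
    rw [← Equiv.sum_comp (Equiv.mulLeft (rot j : PP n m))]
    apply sum_congr rfl
    intro π _
    simp only [Equiv.coe_mulLeft, hRrot]
    have : ((rot j * π : PP n m)) k.1 k.2.succ = j + π k.1 k.2.succ := rfl
    simp only [this, add_eq_left]
  simp only [h3, sum_const, card_univ, Fintype.card_fin, nsmul_eq_mul]
  simp
end DD

section gen
variable {n m : ℕ}
abbrev K (n m : ℕ) := Option (I n m) × Bool

def Gen (W : K n m → I n m → ℝ) : Prop :=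
  ∀ (e : I n m → K n m), Function.Injective e → ∀ j : I n m → Fin (m+1),
    (Matrix.of fun i => G (j i) (W (e i))).det ≠ 0

lemma inj_update {α β : Type} [DecidableEq α] (e : α → β) (he : Function.Injective e) (i : α) (l : β)
    (hl : ∀ j, j ≠ i → e j ≠ l) : Function.Injective (Function.update e i l) := by
  intro p q hpq
  by_cases hp : p = i <;> by_cases hq : q = i
  · rw [hp, hq]
  · subst hp; rw [Function.update_self, Function.update_of_ne hq] at hpq
    exact absurd hpq.symm (hl q hq)
  · subst hq; rw [Function.update_self, Function.update_of_ne hp] at hpq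
    exact absurd hpq (hl p hp)
  · rw [Function.update_of_ne hp, Function.update_of_ne hq] at hpq
    exact he hpq

lemma upd_eq (W : K n m → I n m → ℝ) (e : I n m → K n m) (j : I n m → Fin (m+1)) (i : I n m) (k : Fin (m+1)) (l : K n m) :
    (Matrix.of fun i => G (j i) (W (e i))).updateRow i (G k (W l)) =
      Matrix.of fun p => G (Function.update j i k p) (W (Function.update e i l p)) := by
  ext p q
  by_cases hp : p = i
  · subst hp; simp
  · simp [Matrix.updateRow_ne hp, Function.update_of_ne hp]

lemma gen_ok (W : K n m → I n m → ℝ) (hW : Gen W) (e : I n m → K n m) (he : Function.Injective e)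
    (j : I n m → Fin (m+1)) (l l' : K n m) (k k' : Fin (m+1)) (hl : ∀ i, e i ≠ l) (hl' : ∀ i, e i ≠ l') (hll : l ≠ l') :
    Ok (G k (W l)) (G k' (W l')) (Matrix.of fun i => G (j i) (W (e i))) := by
  refine ⟨hW e he j, fun i => ?_, fun i => ?_, fun i p hp => ?_⟩
  · rw [upd_eq]; exact hW _ (inj_update e he i l fun j _ => hl j) _
  · rw [upd_eq]; exact hW _ (inj_update e he i l' fun j _ => hl' j) _
  · rw [upd_eq, upd_eq]
    refine hW _ (inj_update _ (inj_update e he i l' fun j _ => hl' j) p l fun q hq => ?_) _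
    by_cases hqi : q = i
    · subst hqi; rw [Function.update_self]; exact hll.symm
    · rw [Function.update_of_ne hqi]; exact hl q

lemma D_mod (hp : (m+1).Prime) (W : K n m → I n m → ℝ) (hW : Gen W) :
    ((D (W (none, false)) (fun i => W (some i, false)) : ℤ) : ZMod (m+1)) =
      (D (W (none, true)) (fun i => W (some i, true)) : ℤ) := by
  have h1 : ∀ S : Finset (I n m), ((D (W (none, false)) (fun i => W (some i, false)) : ℤ) : ZMod (m+1)) =
      (D (W (none, false)) (fun i => W (some i, decide (i ∈ S))) : ℤ) := by
    intro S
    induction S using Finset.induction_on with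
    | empty => simp
    | insert k S hk ih =>
      rw [ih, stepB hp _ _ k (W (some k, true))]
      · congr 2
        ext i : 1
        by_cases hik : i = k
        · subst hik; simp
        · simp [Function.update_of_ne hik, hik]
      · intro π
        have := gen_ok W hW (fun i => (some i, decide (i ∈ S))) (fun a b hab => by simpa using (Prod.ext_iff.1 hab).1)
          (fun i => π i.1 i.2.succ) (none, false) (some k, true) 0 (π k.1 k.2.succ) (by simp)
          (by intro i h; simp only [Prod.mk.injEq, Option.some.injEq, decide_eq_true_eq] at h; exact hk (h.1 ▸ h.2)) (by simp)
        rw [G_zero] at this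
        exact this
  rw [h1 univ]
  simp only [mem_univ, decide_true]
  congr 1
  apply stepA
  intro π
  have := gen_ok W hW (fun i => (some i, true)) (fun a b hab => by simpa using (Prod.ext_iff.1 hab).1)
    (fun i => π i.1 i.2.succ) (none, false) (none, true) 0 0 (by simp) (by simp) (by simp)
  rw [G_zero, G_zero] at this
  exact this
end gen
end CT

namespace CT
open Finset
variable {n m : ℕ}

lemma G_cont (k : Fin (m+1)) : Continuous (G k : (I n m → ℝ) → (I n m → ℝ)) :=
  LinearMap.continuous_of_finiteDimensional _

lemma dense_one (e : I n m → K n m) (he : Function.Injective e) (j : I n m → Fin (m+1)) :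
    Dense {W : K n m → I n m → ℝ | (Matrix.of fun i => G (j i) (W (e i))).det ≠ 0} := by
  intro W0
  set W1 : K n m → I n m → ℝ := Function.extend e (fun i => G (-j i) (Pi.single i 1)) 0 with hW1
  set a : Matrix (I n m) (I n m) ℝ := Matrix.of fun i => G (j i) (W0 (e i)) with ha
  have hdet : ∀ t : ℝ, (Matrix.of fun i => G (j i) ((W0 + t • W1) (e i))).det = (-a).charpoly.eval t := by
    intro t
    rw [Matrix.eval_charpoly]
    congr 1
    ext p q
    simp only [Matrix.of_apply, Pi.add_apply, Pi.smul_apply, map_add, map_smul, hW1, he.extend_apply, G_G]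
    simp [G_zero, ha, Matrix.scalar_apply, Matrix.diagonal_apply, Pi.single_apply, eq_comm, add_comm]
  have hfin : {t : ℝ | (-a).charpoly.eval t = 0}.Finite := by
    have := (-a).charpoly.rootSet_finite ℝ
    refine this.subset ?_
    intro t ht
    rw [Polynomial.mem_rootSet]
    exact ⟨(Matrix.charpoly_monic _).ne_zero, by simpa using ht⟩
  have hev : ∀ᶠ t : ℝ in nhdsWithin 0 {0}ᶜ, (-a).charpoly.eval t ≠ 0 := by
    have hf2 := hfin.subset (Set.sdiff_subset (t := {(0:ℝ)}))
    have ho : ({t : ℝ | (-a).charpoly.eval t = 0} \ {0})ᶜ ∈ nhds (0:ℝ) :=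
      hf2.isClosed.isOpen_compl.mem_nhds (by simp)
    filter_upwards [self_mem_nhdsWithin, nhdsWithin_le_nhds ho] with t h1 h2 h3
    exact h2 ⟨h3, h1⟩
  have htend : Filter.Tendsto (fun t : ℝ => W0 + t • W1) (nhdsWithin 0 {0}ᶜ) (nhds W0) := by
    have hc : Continuous (fun t : ℝ => W0 + t • W1) := by fun_prop
    have := hc.tendsto 0
    simp only [zero_smul, add_zero] at this
    exact this.mono_left nhdsWithin_le_nhds
  refine mem_closure_of_tendsto htend ?_
  filter_upwards [hev] with t ht
  rw [hdet]; exact ht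

lemma dense_gen : Dense {W : K n m → I n m → ℝ | Gen W} := by
  have : {W : K n m → I n m → ℝ | Gen W} = ⋂ p : {e : I n m → K n m // Function.Injective e} × (I n m → Fin (m+1)),
      {W : K n m → I n m → ℝ | (Matrix.of fun i => G (p.2 i) (W (p.1.1 i))).det ≠ 0} := by
    ext W
    simp [Gen]
  rw [this]
  apply dense_iInter_of_isOpen
  · intro p
    have hc : Continuous fun W : K n m → I n m → ℝ => (Matrix.of fun i => G (p.2 i) (W (p.1.1 i))).det := by
      apply Continuous.matrix_det
      refine continuous_matrix fun i k => ?_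
      exact (continuous_apply k).comp ((G_cont _).comp (continuous_apply _))
    exact isOpen_ne.preimage hc
  · intro p; exact dense_one _ p.1.2 _

/-- the special configuration -/
def u0 : I n m → I n m → ℝ := fun i => ten (Pi.single i.1 1) 0

lemma row_sum (π : PP n m) (μ : I n m → ℝ) (c : Fin n) (p : Fin m) :
    (∑ k, μ k • A u0 π k) (c, p) = ex μ c ((π c).symm p.succ) - ex μ c ((π c).symm 0) := by
  have h : ∀ j : Fin (m+1), ∑ q : Fin m, μ (c, q) * (if π c q.succ = j then 1 else 0) = ex μ c ((π c).symm j) := by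
    intro j
    have : ∀ q : Fin m, (π c q.succ = j) ↔ q.succ = (π c).symm j := fun q => by rw [Equiv.eq_symm_apply]
    simp only [this]
    refine Fin.cases ?_ (fun q' => ?_) ((π c).symm j)
    · simp [ex, Fin.succ_ne_zero]
    · simp [ex]
  rw [← h, ← h, ← sum_sub_distrib, Finset.sum_apply, Fintype.sum_prod_type, sum_eq_single c]
  · apply sum_congr rfl
    intro q _
    simp only [A, u0, Matrix.of_apply, Pi.smul_apply, smul_eq_mul, G_ten, ten, add_zero, Pi.single_eq_same]
    ring
  · intro c' _ hc'
    apply sum_eq_zero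
    intro q _
    simp [A, u0, G_ten, ten, Pi.single_eq_of_ne hc'.symm]
  · simp

lemma det_A0 (π : PP n m) : (A u0 π).det ≠ 0 := by
  intro h
  obtain ⟨v, hv, h0⟩ := Matrix.exists_vecMul_eq_zero_iff.2 h
  apply hv
  rw [Matrix.vecMul_eq_sum] at h0
  have h1 : ∀ c j, ex v c ((π c).symm j) = ex v c ((π c).symm 0) := by
    intro c j
    refine Fin.cases rfl (fun p => ?_) j
    have := row_sum π v c p
    rw [h0] at this
    simp only [Pi.zero_apply] at this
    linarith
  ext ⟨c, q⟩
  have a1 := h1 c (π c q.succ)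
  have a2 := h1 c (π c 0)
  rw [Equiv.symm_apply_apply] at a1 a2
  have : ex v c q.succ = ex v c 0 := by rw [a1, a2]
  simpa [ex] using this

def ww (π : PP n m) : I n m → ℝ := fun i => (if π i.1 i.2.succ ≠ 0 then 1 else 0) - (if π i.1 0 ≠ 0 then 1 else 0)

lemma ones_eq (π : PP n m) : (fun _ => 1 : I n m → ℝ) = ∑ k, ww π k • A u0 π k := by
  ext ⟨c, p⟩
  rw [row_sum]
  have h : ∀ i, ex (ww π) c i = (if π c i ≠ 0 then 1 else 0) - (if π c 0 ≠ 0 then 1 else 0) := by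
    intro i
    refine Fin.cases ?_ (fun q => ?_) i
    · simp [ex]
    · rfl
  rw [h, h]
  simp [Fin.succ_ne_zero]

lemma det_case1 (π : PP n m) (h : ∀ c, π c 0 = 0) : (A u0 π).det = sg π := by
  have h1 : ∀ c, ∃ σ : Equiv.Perm (Fin m), π c = Equiv.Perm.decomposeFin.symm (0, σ) := by
    intro c
    refine ⟨(Equiv.Perm.decomposeFin (π c)).2, ?_⟩
    have : (Equiv.Perm.decomposeFin (π c)).1 = 0 := by
      have h3 := Equiv.Perm.decomposeFin_symm_apply_zero (Equiv.Perm.decomposeFin (π c)).1 (Equiv.Perm.decomposeFin (π c)).2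
      rw [Prod.mk.eta, Equiv.symm_apply_apply, h c] at h3
      exact h3.symm
    rw [← this, Prod.mk.eta, Equiv.symm_apply_apply]
  choose σ hσ using h1
  have hA : A u0 π = (1 : Matrix (I n m) (I n m) ℝ).submatrix (Equiv.prodCongrRight σ) id := by
    ext ⟨c, q⟩ ⟨c', q'⟩
    have : π c q.succ = (σ c q).succ := by
      rw [hσ, Equiv.Perm.decomposeFin_symm_apply_succ]; simp
    simp only [A, u0, Matrix.of_apply, G_ten, ten, add_zero, this, Matrix.submatrix_apply, Matrix.one_apply, id]
    by_cases hc : c' = c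
    · subst hc; simp [Fin.succ_ne_zero]
    · have hc' : ¬ c = c' := fun h => hc h.symm
      simp [Pi.single_eq_of_ne hc, hc']
  rw [hA, Matrix.det_permute, Matrix.det_one, mul_one, Equiv.Perm.sign_prodCongrRight]
  unfold sg
  push_cast
  apply prod_congr rfl
  intro c _
  rw [hσ, Equiv.Perm.decomposeFin.symm_sign]
  simp

lemma sg_sq (π : PP n m) : sg π * sg π = 1 := by
  unfold sg
  rw [← prod_mul_distrib]
  apply prod_eq_one
  intro c _
  rcases Int.units_eq_one_or (Equiv.Perm.sign (π c)) with h | h <;> simp [h]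

lemma special_near (π : PP n m) : ∀ᶠ p : (I n m → ℝ) × (I n m → I n m → ℝ) in nhds ((fun _ => 1), u0),
    sg π * f p.1 (A p.2 π) = if ∀ c, π c 0 = 0 then 1 else 0 := by
  have hA : Continuous fun p : (I n m → ℝ) × (I n m → I n m → ℝ) => A p.2 π := by
    refine continuous_matrix fun i k => ?_
    exact (continuous_apply k).comp ((G_cont _).comp ((continuous_apply _).comp continuous_snd))
  have hd : Continuous fun p : (I n m → ℝ) × (I n m → I n m → ℝ) => (A p.2 π).det := hA.matrix_det
  have hi : ∀ i, Continuous fun p : (I n m → ℝ) × (I n m → I n m → ℝ) => ((A p.2 π).updateRow i p.1).det * (A p.2 π).det := by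
    intro i
    exact (hA.matrix_updateRow i continuous_fst).matrix_det.mul hd
  have hv : ∀ i, ((A u0 π).updateRow i (fun _ => 1)).det * (A u0 π).det = ww π i * ((A u0 π).det * (A u0 π).det) := by
    intro i
    rw [ones_eq π, Matrix.det_updateRow_sum, smul_eq_mul, mul_assoc]
  have hpos := mul_self_pos.2 (det_A0 π)
  by_cases h : ∀ c, π c 0 = 0
  · rw [if_pos h]
    have hw : ∀ i, ww π i = 1 := by
      intro i
      have : π i.1 i.2.succ ≠ 0 := by
        intro h'
        rw [← h i.1] at h'
        exact Fin.succ_ne_zero _ ((π i.1).injective h')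
      simp [ww, this, h]
    have e1 : ∀ᶠ p : (I n m → ℝ) × (I n m → I n m → ℝ) in nhds ((fun _ => 1), u0),
        ∀ i, 0 < ((A p.2 π).updateRow i p.1).det * (A p.2 π).det := by
      rw [Filter.eventually_all]
      intro i
      refine ((hi i).tendsto _).eventually (lt_mem_nhds ?_)
      change 0 < ((A u0 π).updateRow i (fun _ => 1)).det * (A u0 π).det
      rw [hv, hw, one_mul]; exact hpos
    have e2 : ∀ᶠ p : (I n m → ℝ) × (I n m → I n m → ℝ) in nhds ((fun _ => 1), u0),
        0 < (A p.2 π).det * (A u0 π).det := by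
      have hc := hd.mul (continuous_const (y := (A u0 π).det))
      exact (hc.tendsto ((fun _ => 1), u0)).eventually (lt_mem_nhds hpos)
    filter_upwards [e1, e2] with p h1 h2
    unfold f
    rw [if_pos h1]
    rw [det_case1 π h] at h2
    have hs := sg_sq π
    rcases mul_self_eq_one_iff.1 hs with h3 | h3
    · rw [h3] at h2 ⊢
      simp only [Int.cast_one, mul_one] at h2
      simp [sign_pos h2]
    · rw [h3] at h2 ⊢
      have : (A p.2 π).det < 0 := by push_cast at h2; linarith
      simp [sign_neg this]
  · rw [if_neg h]
    push Not at h
    obtain ⟨c, hc⟩ := h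
    obtain ⟨q, hq⟩ : ∃ q : Fin m, π c q.succ = 0 := by
      have hne : (π c).symm 0 ≠ 0 := by
        intro h'; apply hc; rw [Equiv.symm_apply_eq] at h'; exact h'.symm
      obtain ⟨q, hq⟩ := Fin.exists_succ_eq.2 hne
      exact ⟨q, by rw [hq, Equiv.apply_symm_apply]⟩
    have e1 : ∀ᶠ p : (I n m → ℝ) × (I n m → I n m → ℝ) in nhds ((fun _ => 1), u0),
        ((A p.2 π).updateRow (c, q) p.1).det * (A p.2 π).det < 0 := by
      refine ((hi (c,q)).tendsto _).eventually (gt_mem_nhds ?_)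
      change ((A u0 π).updateRow (c,q) (fun _ => 1)).det * (A u0 π).det < 0
      rw [hv]
      have : ww π (c, q) = -1 := by simp [ww, hq, hc]
      rw [this]; linarith
    filter_upwards [e1] with p h1
    unfold f
    rw [if_neg, mul_zero]
    intro h2
    exact absurd (h2 (c,q)) (not_lt.2 h1.le)

lemma count : (∑ π : PP n m, if ∀ c, π c 0 = 0 then (1:ℤ) else 0) = ((m.factorial : ℤ)) ^ n := by
  have h1 : ((univ : Finset (Equiv.Perm (Fin (m+1)))).filter fun σ => σ 0 = 0).card = m.factorial := by
    rw [card_filter, ← Equiv.sum_comp Equiv.Perm.decomposeFin.symm, Fintype.sum_prod_type]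
    simp [Equiv.Perm.decomposeFin_symm_apply_zero, Fintype.card_perm]
  rw [← h1, sum_boole]
  have : (univ.filter fun π : PP n m => ∀ c, π c 0 = 0) =
      Fintype.piFinset fun _ => ((univ : Finset (Equiv.Perm (Fin (m+1)))).filter fun σ => σ 0 = 0) := by
    ext π; simp
  rw [this, Fintype.card_piFinset]
  simp

/-- zero is a convex combination -/
def CC (π : PP n m) (p : (I n m → ℝ) × (I n m → I n m → ℝ)) : Prop :=
  ∃ t ∈ stdSimplex ℝ (Option (I n m)), -(t none • p.1) + ∑ i, t (some i) • A p.2 π i = 0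

lemma CC_closed (π : PP n m) : IsClosed {p : (I n m → ℝ) × (I n m → I n m → ℝ) | CC π p} := by
  have hcomp : CompactSpace (stdSimplex ℝ (Option (I n m))) := isCompact_iff_compactSpace.1 (isCompact_stdSimplex ℝ _)
  let S : Set ((stdSimplex ℝ (Option (I n m))) × ((I n m → ℝ) × (I n m → I n m → ℝ))) :=
    {z | -((z.1 : Option (I n m) → ℝ) none • z.2.1) + ∑ i, (z.1 : Option (I n m) → ℝ) (some i) • A z.2.2 π i = 0}
  have hS : IsClosed S := by
    refine isClosed_eq ?_ continuous_const
    have hx : ∀ o, Continuous fun z : (stdSimplex ℝ (Option (I n m))) × ((I n m → ℝ) × (I n m → I n m → ℝ)) => (z.1 : Option (I n m) → ℝ) o :=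
      fun o => (continuous_apply o).comp (continuous_subtype_val.comp continuous_fst)
    refine (((hx none).smul (continuous_fst.comp continuous_snd)).neg).add (continuous_finsetSum _ fun i _ => (hx _).smul ?_)
    exact (G_cont _).comp ((continuous_apply i).comp (continuous_snd.comp continuous_snd))
  have := isClosedMap_snd_of_compactSpace _ hS
  convert this using 1
  ext p
  constructor
  · rintro ⟨t, ht, h⟩
    exact ⟨(⟨t, ht⟩, p), h, rfl⟩
  · rintro ⟨⟨t, p'⟩, h, rfl⟩
    exact ⟨t.1, t.2, h⟩

lemma f_ne (π : PP n m) (x : I n m → ℝ) (u : I n m → I n m → ℝ) (h : f x (A u π) ≠ 0) : CC π (x, u) := by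
  unfold f at h
  split_ifs at h with h1
  · have hd : (A u π).det ≠ 0 := by
      intro h'; rw [h'] at h; simp at h
    obtain ⟨l, hl⟩ := exists_coord _ hd x
    have hlp : ∀ i, 0 < l i := by
      intro i
      have := h1 i
      rw [hl, Matrix.det_updateRow_sum, smul_eq_mul, mul_assoc, mul_pos_iff_of_pos_right (mul_self_pos.2 hd)] at this
      exact this
    set s := 1 + ∑ i, l i with hs
    have hsp : 0 < s := by
      have : 0 ≤ ∑ i, l i := sum_nonneg fun i _ => (hlp i).le
      linarith
    refine ⟨fun o => Option.elim o s⁻¹ (fun i => s⁻¹ * l i), ⟨?_, ?_⟩, ?_⟩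
    · rintro (_ | i)
      · exact (inv_pos.2 hsp).le
      · exact (mul_pos (inv_pos.2 hsp) (hlp i)).le
    · rw [Fintype.sum_option]
      simp only [Option.elim_none, Option.elim_some]
      rw [← mul_sum]
      have : s⁻¹ + s⁻¹ * ∑ i, l i = s⁻¹ * s := by rw [hs]; ring
      rw [this, inv_mul_cancel₀ hsp.ne']
    · simp only [Option.elim_none, Option.elim_some, mul_smul]
      rw [← smul_sum, ← hl]
      simp
  · exact absurd rfl h

theorem core (hp : (m+1).Prime) (x : I n m → ℝ) (u : I n m → I n m → ℝ) : ∃ π : PP n m, CC π (x, u) := by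
  by_contra hcon
  push Not at hcon
  set W0 : K n m → I n m → ℝ := fun k => match k with
    | (none, false) => x
    | (some i, false) => u i
    | (none, true) => fun _ => 1
    | (some i, true) => u0 i with hW0
  have hcont : ∀ b : Bool, Continuous fun W : K n m → I n m → ℝ => (W (none, b), fun i => W (some i, b)) := by
    intro b; fun_prop
  have e1 : ∀ᶠ W in nhds W0, ∀ π : PP n m, ¬ CC π (W (none, false), fun i => W (some i, false)) := by
    rw [Filter.eventually_all]
    intro π
    exact ((hcont false).tendsto W0).eventually ((CC_closed π).isOpen_compl.mem_nhds (hcon π))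
  have e2 : ∀ᶠ W in nhds W0, ∀ π : PP n m, sg π * f (W (none, true)) (A (fun i => W (some i, true)) π) = if ∀ c, π c 0 = 0 then 1 else 0 := by
    rw [Filter.eventually_all]
    intro π
    exact ((hcont true).tendsto W0).eventually (special_near π)
  obtain ⟨W, hgen, h1, h2⟩ := (dense_gen.inter_nhds_nonempty (e1.and e2))
  have hmod := D_mod hp W hgen
  have d1 : D (W (none, false)) (fun i => W (some i, false)) = 0 := by
    unfold D
    apply sum_eq_zero
    intro π _
    have : f (W (none, false)) (A (fun i => W (some i, false)) π) = 0 := by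
      by_contra h
      exact h1 π (f_ne π _ _ h)
    rw [this, mul_zero]
  have d2 : D (W (none, true)) (fun i => W (some i, true)) = ((m.factorial : ℤ)) ^ n := by
    unfold D
    rw [← count]
    exact sum_congr rfl fun π _ => h2 π
  rw [d1, d2] at hmod
  have : Fact (m+1).Prime := ⟨hp⟩
  push_cast at hmod
  have h3 := eq_zero_of_pow_eq_zero hmod.symm
  rw [ZMod.natCast_eq_zero_iff, hp.dvd_factorial] at h3
  omega
end CT

open scoped Classical

/-- **Affine colored Tverberg theorem** (Blagojević–Matschke–Ziegler, affine case).
For `d ≥ 1`, `r ≥ 2` prime, `N = (d+1)(r-1)`, any set `P` of `N + 1` points in `ℝ^d`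
colored with `d + 2` colors, with color classes `|C_0| = … = |C_d| = r - 1` and
`|C_{d+1}| = 1`, can be partitioned into `r` rainbow blocks whose convex hulls
intersect. -/
theorem colored_tverberg_affine (d r N : ℕ) (hd : 1 ≤ d) (hr : 2 ≤ r)
    (hrp : Nat.Prime r) (hN : N = (d + 1) * (r - 1))
    (P : Finset (Fin d → ℝ)) (hP : P.card = N + 1)
    (c : (Fin d → ℝ) → Fin (d + 2))
    (hc : ∀ j : Fin (d + 2),
      (P.filter fun x => c x = j).card = if (j : ℕ) = d + 1 then 1 else r - 1) :
    ∃ B : Fin r → Finset (Fin d → ℝ),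
      (∀ a b : Fin r, a ≠ b → Disjoint (B a) (B b)) ∧
      Finset.univ.biUnion B = P ∧
      (∀ a : Fin r, ∀ j : Fin (d + 2), ((B a).filter fun x => c x = j).card ≤ 1) ∧
      (⋂ a : Fin r, convexHull ℝ (B a : Set (Fin d → ℝ))).Nonempty := by
  obtain ⟨m, rfl⟩ : ∃ m, r = m + 1 := ⟨r - 1, by omega⟩
  have hcc : ∀ j : Fin (d+1), (P.filter fun x => c x = j.castSucc).card = m := by
    intro j
    rw [hc, if_neg]
    · rfl
    · have := j.2; simp only [Fin.val_castSucc]; omega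
  have hlast : (P.filter fun x => c x = Fin.last (d+1)).card = 1 := by
    rw [hc, if_pos (by simp)]
  obtain ⟨p0, hp0⟩ := Finset.card_eq_one.1 hlast
  let E := fun j : Fin (d+1) => Finset.equivFinOfCardEq (hcc j)
  let pt : Option (CT.I (d+1) m) → (Fin d → ℝ) := fun o =>
    Option.elim o p0 (fun i => ((E i.1).symm i.2).1)
  have hpt0 : p0 ∈ P ∧ c p0 = Fin.last (d+1) := by
    have : p0 ∈ P.filter fun x => c x = Fin.last (d+1) := by rw [hp0]; simp
    simpa using this
  have hpts : ∀ i : CT.I (d+1) m, pt (some i) ∈ P ∧ c (pt (some i)) = i.1.castSucc := by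
    intro i
    have := ((E i.1).symm i.2).2
    rw [Finset.mem_filter] at this
    exact this
  have hcolor : ∀ i j : CT.I (d+1) m, c (pt (some i)) = c (pt (some j)) → i.1 = j.1 := by
    intro i j h
    rw [(hpts i).2, (hpts j).2] at h
    exact Fin.castSucc_injective _ h
  have hinj : Function.Injective pt := by
    rintro (_ | i) (_ | j) h
    · rfl
    · have h' := congrArg c h
      rw [(hpts j).2] at h'
      change c p0 = _ at h'
      rw [hpt0.2] at h'
      exact absurd h'.symm (Fin.castSucc_ne_last _)
    · have h' := congrArg c h
      rw [(hpts i).2] at h'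
      change _ = c p0 at h'
      rw [hpt0.2] at h'
      exact absurd h' (Fin.castSucc_ne_last _)
    · obtain ⟨c1, q1⟩ := i
      obtain ⟨c2, q2⟩ := j
      have h1 := hcolor _ _ (congrArg c h)
      simp only at h1
      subst h1
      have h2 : (E c1).symm q1 = (E c1).symm q2 := Subtype.ext h
      rw [(E c1).symm.injective h2]
  have hsurj : ∀ x ∈ P, ∃ o, pt o = x := by
    intro x hx
    rcases Fin.eq_castSucc_or_eq_last (c x) with ⟨j, hj⟩ | hj
    · have hm : x ∈ P.filter fun x => c x = j.castSucc := by simp [hx, hj]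
      refine ⟨some (j, E j ⟨x, hm⟩), ?_⟩
      change (((E j).symm (E j ⟨x, hm⟩)).1) = x
      rw [Equiv.symm_apply_apply]
    · have hm : x ∈ P.filter fun x => c x = Fin.last (d+1) := by simp [hx, hj]
      rw [hp0, Finset.mem_singleton] at hm
      exact ⟨none, hm.symm⟩
  let hat : (Fin d → ℝ) → (Fin (d+1) → ℝ) := fun y => Fin.cons 1 y
  obtain ⟨π, t, ht, hzero⟩ := CT.core hrp (-(CT.ten (hat p0) 0)) (fun i => CT.ten (hat (pt (some i))) 0)
  let β : Option (CT.I (d+1) m) → Fin (m+1) := fun o => Option.elim o 0 (fun i => π i.1 i.2.succ)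
  have hz : ∑ o, t o • CT.ten (m := m) (hat (pt o)) (β o) = 0 := by
    rw [Fintype.sum_option, ← hzero]
    simp only [smul_neg, neg_neg]
    congr 1
    apply Finset.sum_congr rfl
    intro i _
    congr 1
    simp only [CT.A, Matrix.of_apply, CT.G_ten, add_zero]
    rfl
  have hS : ∀ k a, (∑ o ∈ Finset.univ.filter (fun o => β o = a), t o * hat (pt o) k) =
      ∑ o ∈ Finset.univ.filter (fun o => β o = 0), t o * hat (pt o) k := by
    intro k a
    refine Fin.cases rfl (fun q => ?_) a
    have := congrFun hz (k, q)
    rw [Finset.sum_apply] at this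
    simp only [Pi.smul_apply, smul_eq_mul, CT.ten, Pi.zero_apply] at this
    rw [Finset.sum_filter, Finset.sum_filter, ← sub_eq_zero, ← Finset.sum_sub_distrib]
    refine Eq.trans (Finset.sum_congr rfl ?_) this
    intro o _
    split_ifs <;> ring
  set T := ∑ o ∈ Finset.univ.filter (fun o => β o = 0), t o with hT
  have hTa : ∀ a, ∑ o ∈ Finset.univ.filter (fun o => β o = a), t o = T := by
    intro a
    have := hS 0 a
    simpa [hat] using this
  have hTpos : 0 < T := by
    have h1 : ∑ a, ∑ o ∈ Finset.univ.filter (fun o => β o = a), t o = 1 := by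
      rw [Finset.sum_fiberwise]; exact ht.2
    simp only [hTa] at h1
    simp only [Finset.sum_const, Finset.card_univ, Fintype.card_fin, nsmul_eq_mul] at h1
    by_contra hneg
    push Not at hneg
    have : ((m+1 : ℕ) : ℝ) * T ≤ 0 := mul_nonpos_of_nonneg_of_nonpos (by positivity) hneg
    linarith
  refine ⟨fun a => (Finset.univ.filter (fun o => β o = a)).image pt, ?_, ?_, ?_, ?_⟩
  · intro a b hab
    rw [Finset.disjoint_left]
    intro x hx hx'
    simp only [Finset.mem_image, Finset.mem_filter, Finset.mem_univ, true_and] at hx hx'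
    obtain ⟨o, ho, rfl⟩ := hx
    obtain ⟨o', ho', h⟩ := hx'
    rw [hinj h] at ho'
    exact hab (ho.symm.trans ho')
  · ext x
    simp only [Finset.mem_biUnion, Finset.mem_image, Finset.mem_filter, Finset.mem_univ, true_and]
    constructor
    · rintro ⟨a, o, -, rfl⟩
      rcases o with _ | i
      · exact hpt0.1
      · exact (hpts i).1
    · intro hx
      obtain ⟨o, ho⟩ := hsurj x hx
      exact ⟨β o, o, rfl, ho⟩
  · intro a j
    rw [Finset.card_le_one]
    intro x hx y hy
    simp only [Finset.mem_image, Finset.mem_filter, Finset.mem_univ, true_and] at hx hy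
    obtain ⟨⟨o, ho, rfl⟩, h1⟩ := hx
    obtain ⟨⟨o', ho', rfl⟩, h2⟩ := hy
    have hcol := h1.trans h2.symm
    congr 1
    rcases o with _ | i <;> rcases o' with _ | i'
    · rfl
    · rw [(hpts i').2] at hcol
      change c p0 = _ at hcol
      rw [hpt0.2] at hcol
      exact absurd hcol.symm (Fin.castSucc_ne_last _)
    · rw [(hpts i).2] at hcol
      change _ = c p0 at hcol
      rw [hpt0.2] at hcol
      exact absurd hcol (Fin.castSucc_ne_last _)
    · have h3 := hcolor _ _ hcol
      obtain ⟨c1, q1⟩ := i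
      obtain ⟨c2, q2⟩ := i'
      simp only at h3
      subst h3
      have h4 : π c1 q1.succ = π c1 q2.succ := ho.trans ho'.symm
      rw [Fin.succ_injective _ ((π c1).injective h4)]
  · refine ⟨(Finset.univ.filter (fun o => β o = 0)).centerMass t pt, ?_⟩
    rw [Set.mem_iInter]
    intro a
    have : (Finset.univ.filter (fun o => β o = 0)).centerMass t pt = (Finset.univ.filter (fun o => β o = a)).centerMass t pt := by
      unfold Finset.centerMass
      rw [hTa, hTa]
      congr 1
      ext k
      have := hS k.succ a
      simp only [hat, Fin.cons_succ] at this
      simp only [Finset.sum_apply, Pi.smul_apply, smul_eq_mul]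
      exact this.symm
    rw [this]
    apply Finset.centerMass_mem_convexHull
    · intro o _; exact ht.1 o
    · rw [hTa]; exact hTpos
    · intro o ho
      exact Finset.mem_coe.2 (Finset.mem_image_of_mem _ ho)
end
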